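/- arXiv:2302.07859 — 2 statements merged into one kernel-verified Lean document; each statement's English description precedes it below -/
import Mathlib

section
/- Fix an integer r ≥ 2 and a real 0 ≤ a ≤ 1. Define h : {pairs of [3]} → [0,1] by h(12) = h(13) = a, h(23) = 0, and let F = {(3,h), K_{r+1}^0} (so F-free weighted graphs are K_{r+1}-free graphs with no triangle having at least two edges of weight greater than a). Then d(F) = 1/2 if a ≤ 1/2; d(F) = a + (1−2a)/r if a > 1/2 and r is even; and d(F) = a²(r−1)/(a(r+1) − 1) if a > 1/2 and r is odd. -/
/-!
Upper bound. Call an edge heavy if its weight exceeds `a`, and raise heavy weights to `1` and the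
other positive weights to `b = max a (1 / 2)`. The value `w(G)` is the quadratic form of the resulting
matrix `W` at the uniform vertex weighting. Symmetrization (`exists_clique_support`) moves the vertex
weighting, without decreasing the form, to one supported on a clique; this clique has at most `r`
vertices and its heavy edges form a matching. There the form is at most `b - ∑ c_u y_u²`, where `c_u` is
`2b - 1` on matched and `b` on unmatched vertices (`quadForm_le_diag`), and Cauchy–Schwarz gives
`b - 1 / ∑ 1 / c_u` (`inv_le_diag`). Since the number of matched vertices is even, the best case is a
perfect matching on `r` vertices for `r` even, and a matching missing one vertex for `r` odd. For
`a ≤ 1 / 2` all `c_u` are nonnegative with `b = 1 / 2`, which gives `1 / 2`.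

Lower bound. Blow-ups of these extremal cliques (a single heavy edge when `a ≤ 1 / 2`), with part sizes
proportional to the weights giving equality in Cauchy–Schwarz, attain the value asymptotically
(`exists_lower`). The two bounds squeeze `β_n`.
-/

open Finset
open scoped Classical

/-- A weighted clique `(r, f)`: a size `r` together with weights on its pairs. -/
structure WeightedClique where
  r : ℕ
  f : Fin r → Fin r → ℝ

/-- `K_r^a`: the weighted clique of size `r` with all weights equal to `a`. -/
def constWeightedClique (r : ℕ) (a : ℝ) : WeightedClique := ⟨r, fun _ _ => a⟩

/-- An edge-weighted graph `(G, w)` contains the weighted clique `C`. -/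
def ContainsWC {n : ℕ} (G : SimpleGraph (Fin n)) (w : Fin n → Fin n → ℝ)
    (C : WeightedClique) : Prop :=
  ∃ φ : Fin C.r → Fin n, Function.Injective φ ∧
    ∀ i j : Fin C.r, i < j → G.Adj (φ i) (φ j) ∧ C.f i j < w (φ i) (φ j)

/-- `(G, w)` is `F`-free: it contains no member of `F`. -/
def WCFree {n : ℕ} (G : SimpleGraph (Fin n)) (w : Fin n → Fin n → ℝ)
    (F : Set WeightedClique) : Prop :=
  ∀ C ∈ F, ¬ ContainsWC G w C

/-- `w(G) = (2/n²)·∑_{e ∈ E(G)} w(e)`, written as a sum over ordered pairs of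
adjacent vertices (each edge counted twice), divided by `n²`. -/
noncomputable def wSum {n : ℕ} (G : SimpleGraph (Fin n)) (w : Fin n → Fin n → ℝ) : ℝ :=
  ((n : ℝ) ^ 2)⁻¹ * ∑ u : Fin n, ∑ v : Fin n, if G.Adj u v then w u v else 0

/-- `β_n(F)`: the supremum of `w(G)` over all `F`-free edge-weighted graphs on
`n` vertices, with edge weights in `[0,1]`. -/
noncomputable def betaWC (F : Set WeightedClique) (n : ℕ) : ℝ :=
  sSup { x : ℝ | ∃ (G : SimpleGraph (Fin n)) (w : Fin n → Fin n → ℝ),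
    (∀ u v, w u v = w v u) ∧
    (∀ u v, G.Adj u v → w u v ∈ Set.Icc (0 : ℝ) 1) ∧
    WCFree G w F ∧ x = wSum G w }

/-- The weighted triangle `(3, h)` with `h(12) = h(13) = a` and `h(23) = 0`
(0-indexed: pairs containing vertex `0` get weight `a`, the pair `{1,2}` gets `0`). -/
def twoHeavyWC (a : ℝ) : WeightedClique :=
  ⟨3, fun i j => if i.val = 0 ∨ j.val = 0 then a else 0⟩


/-! ### Symmetrization: reduction to vertex weights supported on a clique -/

/-- Motzkin–Straus reduction. If `W u v = 0`, the quadratic form `x ⬝ᵥ W *ᵥ x` is affine along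
`e_u - e_v`, so the mass of one of `u`, `v` can be moved to the other without decreasing it; iterating
this makes `W` nonzero on all pairs of the support. -/
lemma exists_clique_support {V : Type*} [Fintype V] (W : Matrix V V ℝ)
    (hs : ∀ u v, W u v = W v u) (h0 : ∀ u, W u u = 0) (k : ℕ) :
    ∀ x : V → ℝ, (∀ u, 0 ≤ x u) → ∑ u, x u = 1 → #{u | x u ≠ 0} = k →
      ∃ y : V → ℝ, (∀ u, 0 ≤ y u) ∧ ∑ u, y u = 1 ∧
        (∀ u v, y u ≠ 0 → y v ≠ 0 → u ≠ v → W u v ≠ 0) ∧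
        x ⬝ᵥ W.mulVec x ≤ y ⬝ᵥ W.mulVec y := by
  induction k using Nat.strong_induction_on with
  | _ k ih =>
    intro x hx hsum hk
    by_cases hcl : ∀ u v, x u ≠ 0 → x v ≠ 0 → u ≠ v → W u v ≠ 0
    · exact ⟨x, hx, hsum, hcl, le_rfl⟩
    push Not at hcl
    obtain ⟨u, v, hu, hv, huv, hW⟩ := hcl
    -- Move the mass of the vertex with the smaller weighted degree.
    wlog hL : W.mulVec x v ≤ W.mulVec x u generalizing u v
    · exact this v u hv hu huv.symm (by rw [hs, hW]) (le_of_not_ge hL)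
    let z : V → ℝ := Pi.single u 1 - Pi.single v 1
    let y : V → ℝ := x + x v • z
    have hyu : y u = x u + x v := by simp [y, z, huv]
    have hyv : y v = 0 := by simp [y, z, huv.symm]
    have hyo : ∀ t, t ≠ u → t ≠ v → y t = x t := fun t h1 h2 => by simp [y, z, h1, h2]
    have hy : ∀ t, 0 ≤ y t := by
      intro t
      by_cases h1 : t = u
      · subst h1; rw [hyu]; exact add_nonneg (hx _) (hx _)
      by_cases h2 : t = v
      · subst h2; rw [hyv]
      rw [hyo t h1 h2]; exact hx t
    have hysum : ∑ t, y t = 1 := by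
      simp [y, z, Finset.sum_add_distrib, ← Finset.mul_sum, hsum]
    have hcard : #{t | y t ≠ 0} < k := by
      rw [← hk]
      apply Finset.card_lt_card
      rw [Finset.ssubset_iff_of_subset]
      · exact ⟨v, by simpa using hv, by simpa using hyv⟩
      · intro t ht
        simp only [Finset.mem_filter, Finset.mem_univ, true_and] at ht ⊢
        by_cases h1 : t = u
        · rwa [h1]
        by_cases h2 : t = v
        · rwa [h2]
        rwa [hyo t h1 h2] at ht
    have hsymm : x ⬝ᵥ W.mulVec z = z ⬝ᵥ W.mulVec x := by
      have hT : W.transpose = W := by ext i j; exact hs j i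
      rw [Matrix.dotProduct_mulVec, ← Matrix.mulVec_transpose, hT, dotProduct_comm]
    have hzx : z ⬝ᵥ W.mulVec x = W.mulVec x u - W.mulVec x v := by
      simp [z, sub_dotProduct]
    have hzz : z ⬝ᵥ W.mulVec z = 0 := by
      simp [z, sub_dotProduct, Matrix.mulVec_sub, h0, hW, hs v u]
    have hexp : y ⬝ᵥ W.mulVec y = x ⬝ᵥ W.mulVec x + 2 * x v * (W.mulVec x u - W.mulVec x v) := by
      have : y ⬝ᵥ W.mulVec y = x ⬝ᵥ W.mulVec x + x v * (x ⬝ᵥ W.mulVec z)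
          + x v * (z ⬝ᵥ W.mulVec x) + x v * (x v * (z ⬝ᵥ W.mulVec z)) := by
        simp only [y, Matrix.mulVec_add, Matrix.mulVec_smul, dotProduct_add, add_dotProduct,
          smul_dotProduct, dotProduct_smul, smul_eq_mul]
        ring
      rw [this, hsymm, hzx, hzz]; ring
    obtain ⟨y', h1, h2, h3, h4⟩ := ih _ hcard y hy hysum rfl
    refine ⟨y', h1, h2, h3, le_trans ?_ h4⟩
    rw [hexp]
    have := mul_nonneg (hx v) (sub_nonneg.2 hL)
    linarith

/-! ### Optimizing the vertex weights on a clique whose heavy edges form a matching -/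

/-- On the support of `y`, let light edges have weight at most `b` and heavy edges (those of `H`)
weight at most `1`. Bounding `2 y_u y_v ≤ y_u² + y_v²` on the heavy edges diagonalizes the form. -/
lemma quadForm_le_diag {V : Type*} [Fintype V] (W : Matrix V V ℝ) (H : SimpleGraph V) (b : ℝ)
    (hb1 : b ≤ 1) (y : V → ℝ) (hy : ∀ u, 0 ≤ y u) (hsum : ∑ u, y u = 1)
    (hW : ∀ u v, y u ≠ 0 → y v ≠ 0 →
      W u v ≤ b - (if u = v then b else 0) + (if H.Adj u v then 1 - b else 0)) :
    y ⬝ᵥ W.mulVec y ≤ b - ∑ u, (b - (1 - b) * (H.degree u : ℝ)) * y u ^ 2 := by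
  have key : ∀ u v, y u * (W u v * y v) ≤ b * (y u * y v) - (if u = v then b * y u ^ 2 else 0)
      + ((if H.Adj u v then (1 - b) / 2 * y u ^ 2 else 0)
        + (if H.Adj v u then (1 - b) / 2 * y v ^ 2 else 0)) := by
    intro u v
    have h1 : y u * (W u v * y v) ≤ (y u * y v) *
        (b - (if u = v then b else 0) + (if H.Adj u v then 1 - b else 0)) := by
      by_cases hu : y u = 0
      · simp [hu]
      by_cases hv : y v = 0
      · simp [hv]
      have := mul_le_mul_of_nonneg_left (hW u v hu hv) (mul_nonneg (hy u) (hy v))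
      linarith
    refine h1.trans ?_
    rw [H.adj_comm v u]
    by_cases huv : u = v
    · subst huv; simp; nlinarith
    · by_cases hA : H.Adj u v
      · simp only [huv, hA, if_true, if_false]
        nlinarith [mul_nonneg (sub_nonneg.2 hb1) (sq_nonneg (y u - y v))]
      · simp [huv, hA]; nlinarith
  have hdeg : ∀ u, ∑ v, (if H.Adj u v then (1 - b) / 2 * y u ^ 2 else 0)
      = (1 - b) / 2 * (H.degree u : ℝ) * y u ^ 2 := by
    intro u
    rw [← Finset.sum_filter, Finset.sum_const, ← SimpleGraph.neighborFinset_eq_filter,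
      SimpleGraph.card_neighborFinset_eq_degree, nsmul_eq_mul]
    ring
  calc y ⬝ᵥ W.mulVec y = ∑ u, ∑ v, y u * (W u v * y v) := by
        simp [dotProduct, Matrix.mulVec, Finset.mul_sum]
    _ ≤ _ := Finset.sum_le_sum fun u _ => Finset.sum_le_sum fun v _ => key u v
    _ = b * ((∑ u, y u) * ∑ v, y v) - ∑ u, b * y u ^ 2
        + (∑ u, (1 - b) / 2 * (H.degree u : ℝ) * y u ^ 2
          + ∑ u, (1 - b) / 2 * (H.degree u : ℝ) * y u ^ 2) := by
        simp only [Finset.sum_add_distrib, Finset.sum_sub_distrib]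
        congr 1
        · congr 1
          · rw [Finset.sum_mul_sum]; simp only [Finset.mul_sum]
          · simp
        · congr 1
          · exact Finset.sum_congr rfl fun u _ => hdeg u
          · rw [Finset.sum_comm]
            exact Finset.sum_congr rfl fun u _ => hdeg u
    _ = _ := by
        rw [hsum, ← Finset.sum_add_distrib, sub_add, ← Finset.sum_sub_distrib, mul_one, mul_one]
        congr 1
        exact Finset.sum_congr rfl fun u _ => by ring

/-- Cauchy–Schwarz for the diagonal form: `1 / T ≤ 1 / ∑ 1 / c_u ≤ ∑ c_u y_u²`, where `1 / c_u` is
`1 / b` on the unmatched and `1 / (2b - 1)` on the matched vertices of `S`, and `T` bounds the sum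
of these reciprocals. -/
lemma inv_le_diag {V : Type*} [Fintype V] (H : SimpleGraph V) (S : Finset V) (b T : ℝ)
    (hb : 1 / 2 < b) (y : V → ℝ) (hsum : ∑ u, y u = 1) (hS : ∀ u, y u ≠ 0 → u ∈ S)
    (hdeg : ∀ u, H.degree u ≤ 1) (hHS : ∀ u v, H.Adj u v → u ∈ S)
    (hT : (#S : ℝ) / b + (∑ u, (H.degree u : ℝ)) * (1 / (2 * b - 1) - 1 / b) ≤ T) :
    1 / T ≤ ∑ u, (b - (1 - b) * (H.degree u : ℝ)) * y u ^ 2 := by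
  have hb0 : 0 < b := by linarith
  have h2b : 0 < 2 * b - 1 := by linarith
  have hc : ∀ u, 0 < b - (1 - b) * (H.degree u : ℝ) := by
    intro u
    have := hdeg u
    interval_cases h : H.degree u
    · simpa using hb0
    · norm_num; linarith
  have hinv : ∀ u, (b - (1 - b) * (H.degree u : ℝ))⁻¹
      = 1 / b + (H.degree u : ℝ) * (1 / (2 * b - 1) - 1 / b) := by
    intro u
    have := hdeg u
    interval_cases h : H.degree u
    · simp
    · norm_num; ring
  have hdeg0 : ∀ u, u ∉ S → H.degree u = 0 := by
    intro u hu
    by_contra h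
    obtain ⟨v, hv⟩ := (H.degree_pos_iff_exists_adj (v := u)).1 (Nat.pos_of_ne_zero h)
    exact hu (hHS u v hv)
  have hsumS : ∑ u ∈ S, y u = 1 := by
    rw [← hsum]
    exact Finset.sum_subset (Finset.subset_univ _) fun u _ hu => by
      by_contra h; exact hu (hS u h)
  have hCS := Finset.sq_sum_div_le_sum_sq_div S y
    (g := fun u => (b - (1 - b) * (H.degree u : ℝ))⁻¹) (fun u _ => inv_pos.2 (hc u))
  have hTS : ∑ u ∈ S, (b - (1 - b) * (H.degree u : ℝ))⁻¹ ≤ T := by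
    refine le_trans (le_of_eq ?_) hT
    simp only [hinv]
    rw [Finset.sum_add_distrib, ← Finset.sum_mul, Finset.sum_const, nsmul_eq_mul]
    congr 1
    · ring
    · congr 1
      exact Finset.sum_subset (Finset.subset_univ _) fun u _ hu => by simp [hdeg0 u hu]
  have hSne : S.Nonempty := by
    rw [Finset.nonempty_iff_ne_empty]; rintro rfl; simp at hsumS
  rw [hsumS, one_pow] at hCS
  calc 1 / T ≤ 1 / ∑ u ∈ S, (b - (1 - b) * (H.degree u : ℝ))⁻¹ :=
        one_div_le_one_div_of_le (Finset.sum_pos (fun u _ => inv_pos.2 (hc u)) hSne) hTS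
    _ ≤ _ := hCS
    _ = ∑ u ∈ S, (b - (1 - b) * (H.degree u : ℝ)) * y u ^ 2 :=
        Finset.sum_congr rfl fun u _ => by rw [div_inv_eq_mul, mul_comm]
    _ ≤ _ := Finset.sum_le_sum_of_subset_of_nonneg (Finset.subset_univ _)
        fun u _ _ => mul_nonneg (hc u).le (sq_nonneg _)

/-! ### The upper bound -/

/-- The claimed value of `d(F)`. -/
noncomputable def dTarget (r : ℕ) (a : ℝ) : ℝ :=
  if a ≤ 1 / 2 then 1 / 2
  else if Even r then a + (1 - 2 * a) / (r : ℝ)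
  else a ^ 2 * ((r : ℝ) - 1) / (a * ((r : ℝ) + 1) - 1)

/-- The optimum over vertex weights on a clique `S` of at most `r` vertices with heavy matching `H`.
The parity of `r` enters because the degree sum of `H` is even. -/
lemma quadForm_le_dTarget {V : Type*} [Fintype V] (r : ℕ) (hr : 2 ≤ r) (a : ℝ) (ha1 : a ≤ 1)
    (W : Matrix V V ℝ) (H : SimpleGraph V) (S : Finset V) (hSr : #S ≤ r)
    (y : V → ℝ) (hy : ∀ u, 0 ≤ y u) (hsum : ∑ u, y u = 1) (hS : ∀ u, y u ≠ 0 → u ∈ S)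
    (hdeg : ∀ u, H.degree u ≤ 1) (hHS : ∀ u v, H.Adj u v → u ∈ S)
    (hW : ∀ u v, y u ≠ 0 → y v ≠ 0 → W u v ≤ max a (1 / 2) -
      (if u = v then max a (1 / 2) else 0) + (if H.Adj u v then 1 - max a (1 / 2) else 0)) :
    y ⬝ᵥ W.mulVec y ≤ dTarget r a := by
  have hdiag := quadForm_le_diag W H (max a (1 / 2)) (max_le ha1 (by norm_num)) y hy hsum hW
  unfold dTarget
  split_ifs with ha2 he
  · rw [max_eq_right ha2] at hdiag
    refine hdiag.trans ?_
    have : 0 ≤ ∑ u, ((1 : ℝ) / 2 - (1 - 1 / 2) * (H.degree u : ℝ)) * y u ^ 2 := by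
      refine Finset.sum_nonneg fun u _ => mul_nonneg ?_ (sq_nonneg _)
      have : (H.degree u : ℝ) ≤ 1 := by exact_mod_cast hdeg u
      linarith
    linarith
  all_goals
    push Not at ha2
    rw [max_eq_left ha2.le] at hdiag
    have ha0 : 0 < a := by linarith
    have h2a : 0 < 2 * a - 1 := by linarith
    have hr2 : (2 : ℝ) ≤ r := by exact_mod_cast hr
    have hgain : 0 ≤ 1 / (2 * a - 1) - 1 / a :=
      sub_nonneg.2 (one_div_le_one_div_of_le h2a (by linarith))
    have hSr' : (#S : ℝ) ≤ r := by exact_mod_cast hSr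
    have hS1 : (#S : ℝ) / a ≤ r / a := by gcongr
    have hdegS : ∑ u, H.degree u ≤ r := by
      refine le_trans ?_ hSr
      rw [Finset.card_eq_sum_ones, ← Finset.sum_subset (Finset.subset_univ S)]
      · exact Finset.sum_le_sum fun u _ => hdeg u
      · intro u _ hu
        by_contra h
        obtain ⟨v, hv⟩ := (H.degree_pos_iff_exists_adj (v := u)).1 (Nat.pos_of_ne_zero h)
        exact hu (hHS u v hv)
  · have hD : (∑ u, (H.degree u : ℝ)) ≤ r := by exact_mod_cast hdegS
    have := inv_le_diag H S a (r / (2 * a - 1)) ha2 y hsum hS hdeg hHS (by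
      have h1 := mul_le_mul_of_nonneg_right hD hgain
      have h2 : (r : ℝ) * (1 / (2 * a - 1) - 1 / a) = r / (2 * a - 1) - r / a := by ring
      linarith)
    rw [one_div_div] at this
    have h3 : (1 - 2 * a) / (r : ℝ) = -((2 * a - 1) / r) := by ring
    linarith
  · -- The degree sum of `H` is even, hence at most `r - 1`.
    have hD : (∑ u, (H.degree u : ℝ)) ≤ r - 1 := by
      have h1 := H.sum_degrees_eq_twice_card_edges
      have h2 : ∑ u, H.degree u + 1 ≤ r := by
        rcases Nat.lt_or_ge (∑ u, H.degree u) r with h | h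
        · exact h
        · exact absurd ⟨#H.edgeFinset, by omega⟩ he
      have h3 : ((∑ u, H.degree u + 1 : ℕ) : ℝ) ≤ r := by exact_mod_cast h2
      push_cast at h3
      linarith
    have hr1 : (0 : ℝ) < r - 1 := by linarith
    have hden : 0 < a * ((r : ℝ) + 1) - 1 := by nlinarith
    have hTeq : (r - 1) / (2 * a - 1) + 1 / a
        = (a * ((r : ℝ) + 1) - 1) / (a * (2 * a - 1)) := by
      field_simp; ring
    have := inv_le_diag H S a ((r - 1) / (2 * a - 1) + 1 / a) ha2 y hsum hS hdeg hHS
      (by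
        have h1 := mul_le_mul_of_nonneg_right hD hgain
        have h2 : ((r : ℝ) - 1) * (1 / (2 * a - 1) - 1 / a)
          = (r - 1) / (2 * a - 1) - r / a + 1 / a := by ring
        linarith)
    rw [hTeq, one_div_div] at this
    have h3 : a ^ 2 * ((r : ℝ) - 1) / (a * ((r : ℝ) + 1) - 1)
        = a - a * (2 * a - 1) / (a * ((r : ℝ) + 1) - 1) := by
      field_simp; ring
    linarith

lemma dTarget_nonneg (r : ℕ) (hr : 2 ≤ r) (a : ℝ) : 0 ≤ dTarget r a := by
  have hr2 : (2 : ℝ) ≤ r := by exact_mod_cast hr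
  unfold dTarget
  split_ifs with ha2 he
  · norm_num
  · push Not at ha2
    have : a + (1 - 2 * a) / (r : ℝ) = (a * (r - 2) + 1) / r := by field_simp; ring
    rw [this]
    have : 0 ≤ a * ((r : ℝ) - 2) := mul_nonneg (by linarith) (by linarith)
    positivity
  · push Not at ha2
    refine div_nonneg (mul_nonneg (sq_nonneg _) (by linarith)) (by nlinarith)

/-- The upper bound holds for every `n > 0`, with no error term. -/
lemma wSum_le_dTarget (r : ℕ) (hr : 2 ≤ r) (a : ℝ) (ha1 : a ≤ 1) {n : ℕ}
    (hn : 0 < n) (G : SimpleGraph (Fin n)) (w : Fin n → Fin n → ℝ)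
    (hs : ∀ u v, w u v = w v u) (hw : ∀ u v, G.Adj u v → w u v ∈ Set.Icc (0 : ℝ) 1)
    (hF : WCFree G w {twoHeavyWC a, constWeightedClique (r + 1) 0}) :
    wSum G w ≤ dTarget r a := by
  have hF1 : ¬ ContainsWC G w (twoHeavyWC a) := hF _ (by simp)
  have hF2 : ¬ ContainsWC G w (constWeightedClique (r + 1) 0) := hF _ (by simp)
  -- Raise heavy weights to `1` and light ones to `max a (1 / 2)`; edges of weight `0` disappear.
  let W : Matrix (Fin n) (Fin n) ℝ := fun u v =>
    if G.Adj u v ∧ 0 < w u v then (if a < w u v then 1 else max a (1 / 2)) else 0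
  have hW0 : ∀ u v, W u v ≠ 0 → G.Adj u v ∧ 0 < w u v := by
    intro u v h
    by_contra hc
    exact h (if_neg hc)
  have hWs : ∀ u v, W u v = W v u := by
    intro u v
    simp only [W, hs u v, G.adj_comm u v]
  obtain ⟨y, hy, hysum, hycl, hle⟩ := exists_clique_support W hWs (by simp [W]) _
    (fun _ => (n : ℝ)⁻¹) (fun _ => by positivity) (by simp; field_simp) rfl
  have hwle : ∀ u v, (if G.Adj u v then w u v else 0) ≤ W u v := by
    intro u v
    by_cases hA : G.Adj u v
    · by_cases hp : 0 < w u v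
      · by_cases hh : a < w u v
        · simpa [W, hA, hp, hh] using (hw u v hA).2
        · have : w u v ≤ max a (1 / 2) := le_max_of_le_left (not_lt.1 hh)
          simpa only [W, hA, hp, hh, if_true, if_false, and_self] using this
      · simp [W, hA, hp]; linarith
    · simp [W, hA]
  have h1 : wSum G w ≤ (fun _ => (n : ℝ)⁻¹) ⬝ᵥ W.mulVec (fun _ => (n : ℝ)⁻¹) := by
    have h2 : (fun _ => (n : ℝ)⁻¹) ⬝ᵥ W.mulVec (fun _ => (n : ℝ)⁻¹)
        = ((n : ℝ) ^ 2)⁻¹ * ∑ u, ∑ v, W u v := by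
      simp only [dotProduct, Matrix.mulVec, ← Finset.sum_mul, ← Finset.mul_sum]
      ring
    rw [h2]
    unfold wSum
    gcongr with u _ v _
    exact hwle u v
  refine h1.trans (hle.trans ?_)
  let S : Finset (Fin n) := {u | y u ≠ 0}
  have hmem : ∀ u, u ∈ S ↔ y u ≠ 0 := fun u => by simp [S]
  have hScl : ∀ u v, u ∈ S → v ∈ S → u ≠ v → G.Adj u v ∧ 0 < w u v := fun u v hu hv huv =>
    hW0 u v (hycl u v ((hmem u).1 hu) ((hmem v).1 hv) huv)
  let H : SimpleGraph (Fin n) :=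
    { Adj := fun u v => u ∈ S ∧ v ∈ S ∧ u ≠ v ∧ a < w u v
      symm := ⟨fun u v h => ⟨h.2.1, h.1, h.2.2.1.symm, by rw [hs]; exact h.2.2.2⟩⟩
      loopless := ⟨fun u h => h.2.2.1 rfl⟩ }
  refine quadForm_le_dTarget r hr a ha1 W H S ?_ y hy hysum (fun u => (hmem u).2) ?_
    (fun u v h => h.1) ?_
  · by_contra hc
    push Not at hc
    obtain ⟨S', hS'S, hS'⟩ := Finset.exists_subset_card_eq (Nat.succ_le_of_lt hc)
    refine hF2 ⟨fun i => S'.orderEmbOfFin hS' i, (S'.orderEmbOfFin hS').injective, ?_⟩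
    intro i j hij
    exact hScl _ _ (hS'S (Finset.orderEmbOfFin_mem _ _ _)) (hS'S (Finset.orderEmbOfFin_mem _ _ _))
      (fun h => hij.ne ((S'.orderEmbOfFin hS').injective h))
  · intro u
    rw [← SimpleGraph.card_neighborFinset_eq_degree, Finset.card_le_one]
    intro v hv v' hv'
    rw [SimpleGraph.mem_neighborFinset] at hv hv'
    obtain ⟨hu, hvS, huv, hh⟩ := hv
    obtain ⟨-, hvS', huv', hh'⟩ := hv'
    by_contra hne
    have hvv := hScl v v' hvS hvS' hne
    have hinj : Function.Injective (![u, v, v'] : Fin 3 → Fin n) := by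
      intro i j hij
      fin_cases i <;> fin_cases j <;> simp_all
    have hedge : ∀ i j : Fin 3, i < j → G.Adj (![u, v, v'] i) (![u, v, v'] j) ∧
        (if i.val = 0 ∨ j.val = 0 then a else 0) < w (![u, v, v'] i) (![u, v, v'] j) := by
      intro i j hij
      fin_cases i <;> fin_cases j <;> simp at hij ⊢
      · exact ⟨(hScl u v hu hvS huv).1, hh⟩
      · exact ⟨(hScl u v' hu hvS' huv').1, hh'⟩
      · exact hvv
    exact hF1 ⟨![u, v, v'], hinj, hedge⟩
  · intro u v hu hv
    by_cases huv : u = v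
    · subst huv; simp [W]
    · have hc := hScl u v ((hmem u).2 hu) ((hmem v).2 hv) huv
      by_cases hh : a < w u v
      · have : H.Adj u v := ⟨(hmem u).2 hu, (hmem v).2 hv, huv, hh⟩
        simp [W, hc, hh, huv, this]
      · have : ¬ H.Adj u v := fun h => hh h.2.2.2
        simp [W, hc, hh, huv, this]

/-! ### The lower bound: blow-ups of a clique with a perfect or near-perfect heavy matching -/

/-- The blow-up of a weighted clique pattern `W` on `κ` with part sizes `N`. -/
lemma blowup_le_betaWC {κ : Type*} [Fintype κ] (r : ℕ) (hr : 2 ≤ r) (a : ℝ) (ha1 : a ≤ 1)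
    {n : ℕ} (hn : 0 < n) (W : κ → κ → ℝ) (hs : ∀ i j, W i j = W j i) (h0 : ∀ i, W i i = 0)
    (hW : ∀ i j, W i j ∈ Set.Icc (0 : ℝ) 1)
    (hheavy : ∀ i j k, a < W i j → a < W i k → j = k)
    (hclique : ∀ φ : Fin (r + 1) → κ, ¬ ∀ i j, i < j → 0 < W (φ i) (φ j))
    (N : κ → ℕ) (hN : ∑ i, N i = n) :
    ((n : ℝ) ^ 2)⁻¹ * ∑ i, ∑ j, (N i : ℝ) * N j * W i j
      ≤ betaWC {twoHeavyWC a, constWeightedClique (r + 1) 0} n := by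
  have e : Fin n ≃ Σ i, Fin (N i) := Fintype.equivOfCardEq (by simp [hN])
  have hsum : ∀ f : κ → ℝ, ∑ u, f (e u).1 = ∑ i, (N i : ℝ) * f i := by
    intro f
    rw [e.sum_comp (fun x => f x.1), Fintype.sum_sigma]
    simp
  let G : SimpleGraph (Fin n) :=
    { Adj := fun u v => 0 < W (e u).1 (e v).1
      symm := ⟨fun u v h => by rw [hs]; exact h⟩
      loopless := ⟨fun u h => by rw [h0] at h; exact lt_irrefl _ h⟩ }
  have hval : ((n : ℝ) ^ 2)⁻¹ * ∑ i, ∑ j, (N i : ℝ) * N j * W i j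
      = wSum G (fun u v => W (e u).1 (e v).1) := by
    unfold wSum
    congr 1
    have h1 : ∀ u v, (if G.Adj u v then W (e u).1 (e v).1 else 0) = W (e u).1 (e v).1 := by
      intro u v
      by_cases h : G.Adj u v
      · simp [h]
      · rw [if_neg h]; exact le_antisymm (hW _ _).1 (not_lt.1 h)
    simp only [h1]
    simp only [fun u => hsum (fun j => W (e u).1 j)]
    rw [hsum (fun i => ∑ j, (N j : ℝ) * W i j)]
    simp only [Finset.mul_sum, mul_assoc]
  apply le_csSup
  · refine ⟨dTarget r a, ?_⟩
    rintro _ ⟨G, w, hs, hw, hF, rfl⟩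
    exact wSum_le_dTarget r hr a ha1 hn G w hs hw hF
  · refine ⟨G, _, fun u v => hs _ _, fun u v _ => hW _ _, ?_, hval⟩
    rintro C (rfl | rfl) ⟨φ, hφ, hc⟩
    · have h01 := (hc (0 : Fin 3) (1 : Fin 3) (show (0 : Fin 3) < 1 by decide)).2
      have h02 := (hc (0 : Fin 3) (2 : Fin 3) (show (0 : Fin 3) < 2 by decide)).2
      have h12 := (hc (1 : Fin 3) (2 : Fin 3) (show (1 : Fin 3) < 2 by decide)).1
      simp only [twoHeavyWC] at h01 h02
      have := hheavy _ _ _ (by simpa using h01) (by simpa using h02)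
      change 0 < W _ _ at h12
      rw [this, h0] at h12
      exact lt_irrefl _ h12
    · exact hclique (fun i => (e (φ i)).1) fun i j hij => (hc i j hij).1

/-- The clique pattern with heavy matching `{i, p i}`, light weight `a`. -/
noncomputable def matchPattern {ι : Type*} (p : ι → ι) (a : ℝ) (i j : ι) : ℝ :=
  if i = j then 0 else if j = p i then 1 else a

/-- Parts of sizes `⌊y_i n⌋` plus isolated leftover vertices (the part `none`) realize in the limit
the value of the form at `y`. -/
lemma exists_tendsto_le_betaWC {ι : Type*} [Fintype ι] (r : ℕ) (hr : 2 ≤ r) (a : ℝ) (ha : 0 ≤ a)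
    (ha1 : a ≤ 1) (hι : Fintype.card ι ≤ r) (p : ι → ι) (hp : Function.Involutive p)
    (y : ι → ℝ) (hy : ∀ i, 0 ≤ y i) (hsum : ∑ i, y i = 1) :
    ∃ g : ℕ → ℝ, Filter.Tendsto g Filter.atTop
        (nhds (∑ i, ∑ j, y i * y j * matchPattern p a i j)) ∧
      ∀ n, 0 < n → g n ≤ betaWC {twoHeavyWC a, constWeightedClique (r + 1) 0} n := by
  refine ⟨fun n => ∑ i, ∑ j, ((⌊y i * n⌋₊ : ℝ) / n) * ((⌊y j * n⌋₊ : ℝ) / n)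
    * matchPattern p a i j, ?_, ?_⟩
  · have hlim : ∀ i, Filter.Tendsto (fun n : ℕ => (⌊y i * n⌋₊ : ℝ) / n) Filter.atTop
        (nhds (y i)) := fun i =>
      (tendsto_nat_floor_mul_div_atTop (hy i)).comp tendsto_natCast_atTop_atTop
    exact tendsto_finsetSum _ fun i _ => tendsto_finsetSum _ fun j _ =>
      ((hlim i).mul (hlim j)).mul_const _
  · intro n hn
    have hle : ∑ i, ⌊y i * n⌋₊ ≤ n := by
      have : ((∑ i, ⌊y i * n⌋₊ : ℕ) : ℝ) ≤ n := by
        push_cast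
        calc ∑ i, (⌊y i * n⌋₊ : ℝ) ≤ ∑ i, y i * n :=
              Finset.sum_le_sum fun i _ => Nat.floor_le (mul_nonneg (hy i) n.cast_nonneg)
          _ = n := by rw [← Finset.sum_mul, hsum, one_mul]
      exact_mod_cast this
    let W : Option ι → Option ι → ℝ := fun o o' =>
      o.elim 0 fun i => o'.elim 0 fun j => matchPattern p a i j
    let N : Option ι → ℕ := fun o => o.elim (n - ∑ i, ⌊y i * n⌋₊) fun i => ⌊y i * n⌋₊
    have hW1 : ∀ i, W none i = 0 := fun i => rfl
    have hW2 : ∀ i, W i none = 0 := fun i => by cases i <;> rfl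
    have hW3 : ∀ i j, W (some i) (some j) = matchPattern p a i j := fun i j => rfl
    have hpat : ∀ i j, a < matchPattern p a i j → j = p i := by
      intro i j h
      unfold matchPattern at h
      split_ifs at h with h1 h2
      · linarith
      · exact h2
      · exact absurd h (lt_irrefl _)
    have key := blowup_le_betaWC r hr a ha1 hn W ?_ ?_ ?_ ?_ ?_ N ?_
    · refine le_trans (le_of_eq ?_) key
      simp only [Fintype.sum_option, hW1, hW2, hW3, mul_zero, Finset.sum_const_zero, zero_add,
        Finset.mul_sum]
      refine Finset.sum_congr rfl fun i _ => Finset.sum_congr rfl fun j _ => ?_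
      simp only [N, Option.elim]
      ring
    · rintro (_ | i) (_ | j)
      · rfl
      · rfl
      · rfl
      · simp only [hW3, matchPattern, eq_comm (a := i) (b := j)]
        have : j = p i ↔ i = p j := by
          constructor <;> rintro rfl <;> rw [hp]
        simp only [this]
    · rintro (_ | i)
      · rfl
      · simp [hW3, matchPattern]
    · rintro (_ | i) (_ | j)
      · simp [hW1]
      · simp [hW1]
      · simp [hW2]
      · rw [hW3]
        unfold matchPattern
        split_ifs
        · simp
        · simp
        · exact ⟨ha, ha1⟩
    · rintro (_ | i) (_ | j) (_ | k) h1 h2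
      all_goals try (simp only [hW1, hW2] at h1 h2; linarith)
      rw [hpat i j h1, hpat i k h2]
    · intro φ hφ
      have hsome : ∀ i, ∃ t, φ i = some t := by
        intro i
        rw [← Option.ne_none_iff_exists']
        intro hnone
        by_cases hi : i < Fin.last r
        · have := hφ i _ hi
          rw [hnone, hW1] at this
          exact lt_irrefl _ this
        · have h0 : (0 : Fin (r + 1)) < Fin.last r :=
            Fin.lt_def.2 (by rw [Fin.val_last, Fin.val_zero]; omega)
          have := hφ 0 i (h0.trans_le (not_lt.1 hi))
          rw [hnone, hW2] at this
          exact lt_irrefl _ this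
      choose ψ hψ using hsome
      have hne : ∀ i j, i < j → ψ i ≠ ψ j := by
        intro i j hij h
        have := hφ i j hij
        rw [hψ, hψ, hW3, h] at this
        simp [matchPattern] at this
      have hinj : Function.Injective ψ := by
        intro i j h
        rcases lt_trichotomy i j with h1 | h1 | h1
        · exact absurd h (hne i j h1)
        · exact h1
        · exact absurd h.symm (hne j i h1)
      have := Fintype.card_le_of_injective ψ hinj
      rw [Fintype.card_fin] at this
      omega
    · simp only [Fintype.sum_option, N, Option.elim]
      omega

/-- Value of the form at a weight vector constant on the matched pairs. -/
lemma matchPattern_form {ι : Type*} [Fintype ι] (a : ℝ) (p : ι → ι)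
    (y : ι → ℝ) (hsum : ∑ i, y i = 1) (hyp : ∀ i, y (p i) = y i) :
    ∑ i, ∑ j, y i * y j * matchPattern p a i j
      = a - ∑ i, (if p i = i then a else 2 * a - 1) * y i ^ 2 := by
  have h1 : ∀ i, ∑ j, y i * y j * matchPattern p a i j
      = a * y i - (if p i = i then a else 2 * a - 1) * y i ^ 2 := by
    intro i
    have h2 : ∀ j, y i * y j * matchPattern p a i j = a * y i * y j
        - (if j = i then a * y i * y j else 0)
        + (if j = p i then (if p i = i then 0 else (1 - a) * y i * y j) else 0) := by
      intro j
      unfold matchPattern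
      by_cases h : i = j
      · subst h
        by_cases h' : i = p i
        · simp [← h']
        · simp [h']
      · by_cases h' : j = p i
        · subst h'
          simp only [h, Ne.symm h, if_true, if_false]; ring
        · simp only [h, Ne.symm h, h', if_false]; ring
    simp only [h2, Finset.sum_add_distrib, Finset.sum_sub_distrib, Finset.sum_ite_eq',
      Finset.mem_univ, if_true, ← Finset.mul_sum, hsum, hyp]
    split_ifs <;> ring
  simp only [h1, Finset.sum_sub_distrib, ← Finset.mul_sum, hsum, mul_one]

/-- The swap on `m` disjoint pairs. -/
def pairSwap (m : ℕ) (x : Fin m × Bool) : Fin m × Bool := (x.1, !x.2)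

/-- A pattern attaining the claimed value in each of the three cases: one heavy pair; `r / 2` heavy
pairs of equal weight; `(r - 1) / 2` heavy pairs and one single part. -/
lemma exists_lower (r : ℕ) (hr : 2 ≤ r) (a : ℝ) (ha : 0 ≤ a) (ha1 : a ≤ 1) :
    ∃ g : ℕ → ℝ, Filter.Tendsto g Filter.atTop (nhds (dTarget r a)) ∧
      ∀ n, 0 < n → g n ≤ betaWC {twoHeavyWC a, constWeightedClique (r + 1) 0} n := by
  have hswap : ∀ m, Function.Involutive (pairSwap m) := fun m x => by simp [pairSwap]
  have hswapne : ∀ m x, pairSwap m x ≠ x := fun m x h => by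
    have := congrArg Prod.snd h
    simp [pairSwap] at this
  have hpairs : ∀ m, 0 < m → 2 * m ≤ r →
      ∃ g : ℕ → ℝ, Filter.Tendsto g Filter.atTop (nhds (a - (2 * a - 1) / (2 * m : ℝ))) ∧
        ∀ n, 0 < n → g n ≤ betaWC {twoHeavyWC a, constWeightedClique (r + 1) 0} n := by
    intro m hm hmr
    have hm' : (0 : ℝ) < m := by exact_mod_cast hm
    have hs : ∑ _i : Fin m × Bool, (1 / (2 * m : ℝ)) = 1 := by
      simp; field_simp
    have := exists_tendsto_le_betaWC (ι := Fin m × Bool) r hr a ha ha1 (by simp; omega)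
      (pairSwap m) (hswap m) (fun _ => 1 / (2 * m : ℝ)) (fun _ => by positivity) hs
    rw [matchPattern_form a _ _ hs (fun _ => rfl)] at this
    convert this using 5
    simp [hswapne]
    field_simp
  unfold dTarget
  split_ifs with ha2 he
  · have := hpairs 1 one_pos (by omega)
    convert this using 5
    push_cast; ring
  · obtain ⟨m, rfl⟩ := he
    have := hpairs m (by omega) (by omega)
    convert this using 5
    push_cast
    ring
  · push Not at ha2
    obtain ⟨m, rfl⟩ := Nat.not_even_iff_odd.1 he
    have hm : (1 : ℝ) ≤ m := by exact_mod_cast (by omega : 1 ≤ m)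
    have ha0 : 0 < a := by linarith
    have h2a : 0 < 2 * a - 1 := by linarith
    -- Equality in Cauchy–Schwarz: weights proportional to `1 / a` and `1 / (2a - 1)`.
    obtain ⟨D, hDdef⟩ : ∃ D, D = 2 * a * m + (2 * a - 1) := ⟨_, rfl⟩
    have hD : 0 < D := by rw [hDdef]; positivity
    let y : Option (Fin m × Bool) → ℝ := fun o => o.elim ((2 * a - 1) / D) fun _ => a / D
    have hy : ∀ o, 0 ≤ y o := by
      rintro (_ | o) <;> simp only [y, Option.elim] <;> positivity
    have hs : ∑ o, y o = 1 := by
      simp only [Fintype.sum_option, y, Option.elim]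
      simp
      field_simp
      rw [hDdef]
      ring
    have hyp : ∀ o, y (o.map (pairSwap m)) = y o := by rintro (_ | o) <;> rfl
    have := exists_tendsto_le_betaWC (ι := Option (Fin m × Bool)) (2 * m + 1) hr a ha ha1
      (by simp; omega) (Option.map (pairSwap m))
      (fun o => by cases o <;> simp [hswap m _]) y hy hs
    rw [matchPattern_form a _ _ hs hyp] at this
    convert this using 4
    simp only [Fintype.sum_option, y, Option.elim, Option.map, Option.some.injEq, hswapne]
    have hD' : a * (((2 * m + 1 : ℕ) : ℝ) + 1) - 1 = D := by rw [hDdef]; push_cast; ring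
    rw [hD']
    simp
    field_simp
    rw [hDdef]
    ring

/-- For `r ≥ 2` and `0 ≤ a ≤ 1`, forbidding `K_{r+1}` and any triangle with at least
two edges of weight greater than `a`:
`d(F) = 1/2` if `a ≤ 1/2`; `d(F) = a + (1-2a)/r` if `a > 1/2` and `r` even;
`d(F) = a²(r-1)/(a(r+1)-1)` if `a > 1/2` and `r` odd. -/
theorem dWC_two_heavy (r : ℕ) (hr : 2 ≤ r) (a : ℝ) (ha : 0 ≤ a) (ha1 : a ≤ 1) :
    Filter.Tendsto (betaWC {twoHeavyWC a, constWeightedClique (r + 1) 0})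
      Filter.atTop
      (nhds (if a ≤ 1 / 2 then 1 / 2
        else if Even r then a + (1 - 2 * a) / (r : ℝ)
        else a ^ 2 * ((r : ℝ) - 1) / (a * ((r : ℝ) + 1) - 1))) := by
  obtain ⟨g, hg, hle⟩ := exists_lower r hr a ha ha1
  refine tendsto_of_tendsto_of_tendsto_of_le_of_le' hg tendsto_const_nhds ?_ ?_
  · filter_upwards [Filter.eventually_gt_atTop 0] with n hn using hle n hn
  · filter_upwards [Filter.eventually_gt_atTop 0] with n hn
    refine Real.sSup_le ?_ (dTarget_nonneg r hr a)
    rintro _ ⟨G, w, hs, hw, hF, rfl⟩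
    exact wSum_le_dTarget r hr a ha1 hn G w hs hw hF
end

section
/- The Ramsey–Turán density satisfies ρ_4(11) ≤ 4/7; equivalently, for every δ > 0 there exist ε > 0 and n_0 such that every K_{11}-free graph G on n ≥ n_0 vertices with α_4(G) ≤ ε·n has at most (4/7 + δ)·C(n,2) edges. -/
/-!
Apply Szemerédi's regularity lemma to `G` and give every regular pair of clusters an integer
*level* `s ∈ {0, …, 4}`: the least `s` with `d ≤ s / 4 + 2η`, where `d` is the density of the pair.
Up to `o(n²)`, twice the number of edges is at most `∑ (s A B / 4) |A| |B|`, so it is enough to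
bound the quadratic form with matrix `s` by `16/7` times the square of the sum of the weights.

*Embedding.* Since `α₄(G)` is small, every linear-size set contains a `K₄`. If a pair `(A, B)` has
level `s ≥ 1`, a typical `K₄` in `A` sends more than `s - 1` edges on average to a vertex of `B`, so
by pigeonhole `s` of its vertices have a common neighbourhood of linear size in `B`
(`pigeon`). Taking a further `K₄` there gives a clique on `4 + s` vertices (`edge_clique`); a
triangle of clusters with levels `s₁, s₂, s₃` gives a clique on `s₁ + s₂ + s₃` vertices
(`tri_clique`). Inside a set of `k` clusters with pairwise positive levels, each of the remaining
clusters contributes one more vertex (`peel`). As `G` is `K₁₁`-free, this yields `s + k ≤ 8` for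
every pair (`k ≤ 6`) and `s₁ + s₂ + s₃ + k ≤ 13` for every triple (`k ≤ 5`); these are
`cluster_edge` and `cluster_tri`.

*Optimization.* By Zykov symmetrization (`lag_symm`) the quadratic form only has to be bounded on
sets of clusters with pairwise positive levels. There (`lag_clique`) the argument depends on the
number `k` of clusters. For `k ≥ 6` all levels are at most `2`. For `k = 5` levels are at most `3`
and level `3` is triangle-free, so Mantel's theorem in weighted form applies. For `k = 4` triples
sum to at most `9`, and every admissible pattern containing a `4` is dominated by one of a short
list. For `k = 3` the levels sum to at most `10`, and the pattern `(4, 4, 2)` attains the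
value `16/7`, which is the origin of the density `4/7`.
-/

open Finset
open scoped Classical

/-- `α_p(G)`: the largest size of a vertex subset inducing a `K_p`-free subgraph. -/
noncomputable def alphaP {V : Type} [Fintype V] (p : ℕ) (G : SimpleGraph V) : ℕ :=
  sSup {k : ℕ | ∃ s : Finset V, s.card = k ∧ ∀ t : Finset V, t ⊆ s → ¬ G.IsNClique p t}

/-- The number of edges of `G`. -/
noncomputable def edgeCount {V : Type} [Fintype V] (G : SimpleGraph V) : ℕ :=
  G.edgeSet.ncard

/-! ### Symmetrization -/

/-- Zykov symmetrization in its Motzkin–Straus form: a bound for a quadratic form with zero diagonal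
on the sets where all off-diagonal entries are nonzero holds on every set. If `s i j = 0`, the form
is linear along moving weight between `i` and `j`, so all weight can be moved to the one of the two
with the larger partial derivative. -/
theorem lag_symm {ι : Type*} [DecidableEq ι] (s : ι → ι → ℝ) (hs : ∀ i j, s i j = s j i)
    (hd : ∀ i, s i i = 0) (c : ℝ)
    (hcl : ∀ S : Finset ι, (∀ i ∈ S, ∀ j ∈ S, i ≠ j → s i j ≠ 0) → ∀ x : ι → ℝ, (∀ i, 0 ≤ x i) →
      ∑ i ∈ S, ∑ j ∈ S, s i j * x i * x j ≤ c * (∑ i ∈ S, x i) ^ 2)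
    (S : Finset ι) : ∀ x : ι → ℝ, (∀ i, 0 ≤ x i) →
      ∑ i ∈ S, ∑ j ∈ S, s i j * x i * x j ≤ c * (∑ i ∈ S, x i) ^ 2 := by
  induction S using Finset.strongInduction with
  | H S ih =>
  intro x hx
  by_cases hS : ∀ i ∈ S, ∀ j ∈ S, i ≠ j → s i j ≠ 0
  · exact hcl S hS x hx
  push Not at hS
  obtain ⟨i₀, hi₀, j₀, hj₀, hij₀, h0⟩ := hS
  -- `L i` is half the partial derivative of the form in the direction `i`
  let L : ι → ℝ := fun i => ∑ k ∈ S, s i k * x k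
  obtain ⟨i, hi, j, hj, hij, hs0, hL⟩ : ∃ i ∈ S, ∃ j ∈ S, i ≠ j ∧ s i j = 0 ∧ L i ≤ L j := by
    rcases le_total (L i₀) (L j₀) with h | h
    · exact ⟨i₀, hi₀, j₀, hj₀, hij₀, h0, h⟩
    · exact ⟨j₀, hj₀, i₀, hi₀, hij₀.symm, by rw [hs, h0], h⟩
  have hjS : j ∈ S.erase i := by simp [hj, hij.symm]
  set U := (S.erase i).erase j with hU
  have hiU : i ∉ U := by simp [hU]
  have hjU : j ∉ U := by simp [hU]
  -- peel the two indices off any sum over `S`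
  have e1 : ∀ f : ι → ℝ, ∑ k ∈ S, f k = f i + (f j + ∑ k ∈ U, f k) := fun f => by
    rw [← Finset.add_sum_erase S f hi, ← Finset.add_sum_erase _ f hjS]
  have e2 : ∀ f : ι → ℝ, ∑ k ∈ S.erase i, f k = f j + ∑ k ∈ U, f k := fun f => by
    rw [← Finset.add_sum_erase _ f hjS]
  let y : ι → ℝ := Function.update x j (x i + x j)
  have hyj : y j = x i + x j := by simp [y]
  have hyU : ∀ k ∈ U, y k = x k := fun k hk => by
    have : k ≠ j := fun h => hjU (h ▸ hk)
    simp [y, this]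
  have hy : ∀ k, 0 ≤ y k := fun k => by
    by_cases h : k = j
    · rw [h, hyj]; exact add_nonneg (hx _) (hx _)
    · simp [y, h, hx]
  have key := ih (S.erase i) (Finset.erase_ssubset hi) y hy
  have hsum : ∑ k ∈ S.erase i, y k = ∑ k ∈ S, x k := by
    rw [e1, e2, hyj, Finset.sum_congr rfl hyU]; ring
  rw [hsum] at key
  refine le_trans ?_ key
  have hLi : L i = ∑ k ∈ U, s i k * x k := by simp only [L]; rw [e1, hd, hs0]; ring
  have hLj : L j = ∑ k ∈ U, s j k * x k := by simp only [L]; rw [e1, hd, hs j i, hs0]; ring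
  have r1 : ∀ a : ι, ∑ k ∈ U, s k a * x k * x a = x a * ∑ k ∈ U, s a k * x k := fun a => by
    rw [Finset.mul_sum]; exact Finset.sum_congr rfl fun k _ => by rw [hs k a]; ring
  have r2 : ∀ a : ι, ∑ k ∈ U, s a k * x a * x k = x a * ∑ k ∈ U, s a k * x k := fun a => by
    rw [Finset.mul_sum]; exact Finset.sum_congr rfl fun k _ => by ring
  have q1 : ∑ a ∈ S, ∑ b ∈ S, s a b * x a * x b
      = (∑ a ∈ U, ∑ b ∈ U, s a b * x a * x b) + 2 * x i * L i + 2 * x j * L j := by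
    simp only [e1, Finset.sum_add_distrib, hd, hs0, hs j i, r1, r2, hLi, hLj]; ring
  have q2 : ∑ a ∈ S.erase i, ∑ b ∈ S.erase i, s a b * y a * y b
      = (∑ a ∈ U, ∑ b ∈ U, s a b * x a * x b) + 2 * (x i + x j) * L j := by
    have r3 : ∑ k ∈ U, s k j * y k * y j = (x i + x j) * L j := by
      rw [hLj, Finset.mul_sum]
      exact Finset.sum_congr rfl fun k hk => by rw [hs k j, hyU k hk, hyj]; ring
    have r4 : ∑ k ∈ U, s j k * y j * y k = (x i + x j) * L j := by
      rw [hLj, Finset.mul_sum]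
      exact Finset.sum_congr rfl fun k hk => by rw [hyU k hk, hyj]; ring
    have r5 : ∑ a ∈ U, ∑ b ∈ U, s a b * y a * y b = ∑ a ∈ U, ∑ b ∈ U, s a b * x a * x b :=
      Finset.sum_congr rfl fun a ha => Finset.sum_congr rfl fun b hb => by rw [hyU a ha, hyU b hb]
    simp only [e2, Finset.sum_add_distrib, hd, r3, r4, r5]; ring
  rw [q1, q2]
  nlinarith [mul_le_mul_of_nonneg_left hL (hx i)]

/-! ### Quadratic forms on few clusters -/

theorem k4_star (x y z w : ℝ) :
    4*(x*y)+4*(x*z)+4*(x*w)+y*z+y*w+z*w ≤ 8/7*(x+y+z+w)^2 := by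
  nlinarith [sq_nonneg (y-z), sq_nonneg (y-w), sq_nonneg (z-w), sq_nonneg (x-3/5*(y+z+w)),
    sq_nonneg (x-3/4*(y+z+w))]

theorem k4_cycle (x y z w : ℝ) :
    4*(x*y)+4*(y*z)+4*(z*w)+4*(w*x)+x*z+y*w ≤ 8/7*(x+y+z+w)^2 := by
  nlinarith [sq_nonneg (x-z), sq_nonneg (y-w), sq_nonneg (x+z-y-w)]

theorem k4_c1 (x y z w : ℝ) (hx : 0 ≤ x) (hy : 0 ≤ y) (hz : 0 ≤ z) (hw : 0 ≤ w) :
    4*(x*y)+4*(x*z)+3*(x*w)+y*z+2*(y*w)+2*(z*w) ≤ 8/7*(x+y+z+w)^2 := by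
  nlinarith [sq_nonneg (y-z), sq_nonneg (x-w),
    sq_nonneg (x-3/4*(y+z)), sq_nonneg (x-3/4*(y+z)-w/2),
    mul_nonneg hx hy, mul_nonneg hx hz, mul_nonneg hx hw, mul_nonneg hy hw, mul_nonneg hz hw]

theorem k4_c2 (x y z w : ℝ) (hx : 0 ≤ x) (hy : 0 ≤ y) (hz : 0 ≤ z) (hw : 0 ≤ w) :
    4*(x*y)+4*(x*z)+2*(x*w)+y*z+3*(y*w)+3*(z*w) ≤ 8/7*(x+y+z+w)^2 := by
  nlinarith [sq_nonneg (y-z), sq_nonneg (x-w),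
    sq_nonneg (x-3/4*(y+z)), sq_nonneg (x-3/4*(y+z)+w/2),
    mul_nonneg hx hy, mul_nonneg hx hz, mul_nonneg hx hw, mul_nonneg hy hw, mul_nonneg hz hw]

/-- Level patterns `(s₁₃, s₁₄, s₂₃, s₂₄, s₃₄)` on four clusters with `s₁₂ = 4`
that dominate every admissible one. -/
def k4_list : List (ℕ × ℕ × ℕ × ℕ × ℕ) :=
  [(4,4,1,1,1), (1,1,4,4,1), (1,4,4,1,4), (4,1,1,4,4),
   (4,3,1,2,2), (3,4,2,1,2), (1,2,4,3,2), (2,1,3,4,2),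
   (4,2,1,3,3), (2,4,3,1,3), (1,3,4,2,3), (3,1,2,4,3),
   (3,2,2,3,4), (2,3,3,2,4), (3,3,2,2,3), (2,2,3,3,3)]

/-- Levels in `{1, …, 4}` on four clusters, with `s₁₂ = 4` and every triple summing to at most `9`,
are bounded entrywise by a member of `k4_list`. Here `b, c, d, e, f` are
`s₁₃, s₁₄, s₂₃, s₂₄, s₃₄`. -/
theorem k4_dom : ∀ b d c e f : Fin 5, 1 ≤ b.1 → 1 ≤ d.1 → b.1 + d.1 ≤ 5 → 1 ≤ c.1 → 1 ≤ e.1 →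
    c.1 + e.1 ≤ 5 → b.1 + c.1 + f.1 ≤ 9 → d.1 + e.1 + f.1 ≤ 9 →
    (k4_list.any fun t => decide
      (b.1 ≤ t.1 ∧ c.1 ≤ t.2.1 ∧ d.1 ≤ t.2.2.1 ∧ e.1 ≤ t.2.2.2.1 ∧ f.1 ≤ t.2.2.2.2)) = true := by
  decide +kernel

theorem k4_full (x y z w : ℝ) (hx : 0 ≤ x) (hy : 0 ≤ y) (hz : 0 ≤ z) (hw : 0 ≤ w) (b c d e f : ℕ)
    (hb : 1 ≤ b ∧ b ≤ 4) (hc : 1 ≤ c ∧ c ≤ 4) (hd : 1 ≤ d ∧ d ≤ 4) (he : 1 ≤ e ∧ e ≤ 4)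
    (hf : 1 ≤ f ∧ f ≤ 4) (h1 : b + d ≤ 5) (h2 : c + e ≤ 5) (h3 : b + c + f ≤ 9)
    (h4 : d + e + f ≤ 9) :
    4*(x*y)+b*(x*z)+c*(x*w)+d*(y*z)+e*(y*w)+f*(z*w) ≤ 8/7*(x+y+z+w)^2 := by
  -- the sixteen patterns are relabellings of the four forms bounded above
  have s1 := k4_star x y z w
  have s2 := k4_star y x z w
  have r1 := k4_cycle x y z w
  have r2 := k4_cycle x y w z
  have p1 := k4_c1 x y z w hx hy hz hw
  have p2 := k4_c1 x y w z hx hy hw hz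
  have p3 := k4_c1 y x z w hy hx hz hw
  have p4 := k4_c1 y x w z hy hx hw hz
  have q1 := k4_c2 x y z w hx hy hz hw
  have q2 := k4_c2 x y w z hx hy hw hz
  have q3 := k4_c2 y x z w hy hx hz hw
  have q4 := k4_c2 y x w z hy hx hw hz
  rw [show y + x + z + w = x + y + z + w by ring] at s2 p3 q3
  rw [show x + y + w + z = x + y + z + w by ring] at r2 p2 q2
  rw [show y + x + w + z = x + y + z + w by ring] at p4 q4
  have n1 := mul_nonneg hx hy
  have n2 := mul_nonneg hx hz
  have n3 := mul_nonneg hx hw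
  have n4 := mul_nonneg hy hz
  have n5 := mul_nonneg hy hw
  have n6 := mul_nonneg hz hw
  rw [mul_comm y x] at *
  rw [mul_comm w z] at *
  rw [mul_comm w x] at *
  rw [mul_comm z x] at *
  generalize (x+y+z+w)^2 = T at *
  generalize x*y = A, x*z = B, x*w = C, y*z = D, y*w = E, z*w = F at *
  have hany := k4_dom ⟨b, by omega⟩ ⟨d, by omega⟩ ⟨c, by omega⟩
    ⟨e, by omega⟩ ⟨f, by omega⟩ hb.1 hd.1 h1 hc.1 he.1 h2 h3 h4
  obtain ⟨t, ht, hle⟩ := List.any_eq_true.1 hany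
  obtain ⟨tb, tc, td, te, tf⟩ := of_decide_eq_true hle
  have m2 := mul_le_mul_of_nonneg_right (Nat.cast_le (α := ℝ).2 tb) n2
  have m3 := mul_le_mul_of_nonneg_right (Nat.cast_le (α := ℝ).2 tc) n3
  have m4 := mul_le_mul_of_nonneg_right (Nat.cast_le (α := ℝ).2 td) n4
  have m5 := mul_le_mul_of_nonneg_right (Nat.cast_le (α := ℝ).2 te) n5
  have m6 := mul_le_mul_of_nonneg_right (Nat.cast_le (α := ℝ).2 tf) n6
  refine (add_le_add (add_le_add (add_le_add (add_le_add (add_le_add le_rfl m2) m3) m4) m5)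
    m6).trans ?_
  clear m2 m3 m4 m5 m6
  simp only [k4_list, List.mem_cons, List.not_mem_nil, or_false] at ht
  rcases ht with rfl | rfl | rfl | rfl | rfl | rfl | rfl | rfl | rfl | rfl | rfl | rfl | rfl |
    rfl | rfl | rfl <;> push_cast <;> linarith

/-- The extremal form: levels `(4, 4, 2)`, with equality at weights `(3, 2, 2)`. -/
theorem k3 (x y z : ℝ) :
    4*(x*y)+4*(x*z)+2*(y*z) ≤ 8/7*(x+y+z)^2 := by
  nlinarith [sq_nonneg (y-z), sq_nonneg (x-3/4*(y+z))]

theorem k3' (x y z : ℝ) :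
    4*(x*y)+3*(x*z)+3*(y*z) ≤ 8/7*(x+y+z)^2 := by
  nlinarith [sq_nonneg (x-y), sq_nonneg (z-5/16*(x+y))]

theorem k4_gen (x y z w : ℝ) (hx : 0 ≤ x) (hy : 0 ≤ y) (hz : 0 ≤ z) (hw : 0 ≤ w)
    (a b c d e f : ℕ) (ha : 1 ≤ a ∧ a ≤ 4)
    (hb : 1 ≤ b ∧ b ≤ 4) (hc : 1 ≤ c ∧ c ≤ 4) (hd : 1 ≤ d ∧ d ≤ 4) (he : 1 ≤ e ∧ e ≤ 4)
    (hf : 1 ≤ f ∧ f ≤ 4) (h1 : a + b + d ≤ 9) (h2 : a + c + e ≤ 9) (h3 : b + c + f ≤ 9)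
    (h4 : d + e + f ≤ 9) :
    a*(x*y)+b*(x*z)+c*(x*w)+d*(y*z)+e*(y*w)+f*(z*w) ≤ 8/7*(x+y+z+w)^2 := by
  rcases ha.2.eq_or_lt with h | ha'
  · subst h
    exact_mod_cast k4_full x y z w hx hy hz hw b c d e f hb hc hd he hf (by omega) (by omega) h3 h4
  rcases hb.2.eq_or_lt with h | hb'
  · subst h
    have := k4_full x z y w hx hz hy hw a c d f e ha hc hd hf he (by omega) (by omega) h2 (by omega)
    push_cast; linarith
  rcases hc.2.eq_or_lt with h | hc'
  · subst h
    have := k4_full x w y z hx hw hy hz a b e f d ha hb he hf hd (by omega) (by omega) h1 (by omega)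
    push_cast; linarith
  rcases hd.2.eq_or_lt with h | hd'
  · subst h
    have := k4_full y z x w hy hz hx hw a e b f c ha he hb hf hc (by omega) (by omega) (by omega)
      (by omega)
    push_cast; linarith
  rcases he.2.eq_or_lt with h | he'
  · subst h
    have := k4_full y w x z hy hw hx hz a d c f b ha hd hc hf hb (by omega) (by omega) (by omega)
      (by omega)
    push_cast; linarith
  rcases hf.2.eq_or_lt with h | hf'
  · subst h
    have := k4_full z w x y hz hw hx hy b d c e a hb hd hc he ha (by omega) (by omega) (by omega)
      (by omega)
    push_cast; linarith
  -- all levels are at most `3`, and then the maximum is at equal weights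
  have cast : ∀ n : ℕ, n < 4 → (n : ℝ) ≤ 3 := fun n hn => by exact_mod_cast Nat.lt_succ_iff.1 hn
  have m1 := mul_le_mul_of_nonneg_right (cast a ha') (mul_nonneg hx hy)
  have m2 := mul_le_mul_of_nonneg_right (cast b hb') (mul_nonneg hx hz)
  have m3 := mul_le_mul_of_nonneg_right (cast c hc') (mul_nonneg hx hw)
  have m4 := mul_le_mul_of_nonneg_right (cast d hd') (mul_nonneg hy hz)
  have m5 := mul_le_mul_of_nonneg_right (cast e he') (mul_nonneg hy hw)
  have m6 := mul_le_mul_of_nonneg_right (cast f hf') (mul_nonneg hz hw)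
  nlinarith [sq_nonneg (x-y), sq_nonneg (x-z), sq_nonneg (x-w), sq_nonneg (y-z), sq_nonneg (y-w),
    sq_nonneg (z-w), sq_nonneg (x+y+z+w)]

theorem k3_gen (x y z : ℝ) (hx : 0 ≤ x) (hy : 0 ≤ y) (hz : 0 ≤ z) (a b c : ℕ)
    (ha : a ≤ 4) (hb : b ≤ 4) (hc : c ≤ 4) (h : a + b + c ≤ 10) :
    a*(x*y)+b*(x*z)+c*(y*z) ≤ 8/7*(x+y+z)^2 := by
  have n1 := mul_nonneg hx hy
  have n2 := mul_nonneg hx hz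
  have n3 := mul_nonneg hy hz
  have red : ∀ p q r : ℕ, a ≤ p → b ≤ q → c ≤ r →
      p*(x*y)+q*(x*z)+r*(y*z) ≤ 8/7*(x+y+z)^2 →
      a*(x*y)+b*(x*z)+c*(y*z) ≤ 8/7*(x+y+z)^2 := fun p q r hp hq hr h => by
    have m1 := mul_le_mul_of_nonneg_right (Nat.cast_le (α := ℝ).2 hp) n1
    have m2 := mul_le_mul_of_nonneg_right (Nat.cast_le (α := ℝ).2 hq) n2
    have m3 := mul_le_mul_of_nonneg_right (Nat.cast_le (α := ℝ).2 hr) n3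
    linarith
  have cases : (a ≤ 2) ∨ (b ≤ 2) ∨ (c ≤ 2) ∨ (a ≤ 3 ∧ b ≤ 3) ∨ (a ≤ 3 ∧ c ≤ 3) ∨
      (b ≤ 3 ∧ c ≤ 3) := by
    omega
  rcases cases with h | h | h | h | h | h
  · refine red 2 4 4 h hb hc ?_
    have := k3 z x y; push_cast; linarith
  · refine red 4 2 4 ha h hc ?_
    have := k3 y x z; push_cast; linarith
  · refine red 4 4 2 ha hb h ?_
    have := k3 x y z; push_cast; linarith
  · refine red 3 3 4 h.1 h.2 hc ?_
    have := k3' y z x; push_cast; linarith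
  · refine red 3 4 3 h.1 hb h.2 ?_
    have := k3' x z y; push_cast; linarith
  · refine red 4 3 3 ha h.1 h.2 ?_
    have := k3' x y z; push_cast; linarith

/-- The weighted form of Mantel's theorem. -/
theorem triangle_free_lag {ι : Type*} [DecidableEq ι] (h : ι → ι → Prop)
    [∀ i j, Decidable (h i j)] (hs : ∀ i j, h i j → h j i) (hd : ∀ i, ¬ h i i)
    (htri : ∀ i j k, h i j → h i k → h j k → False) (S : Finset ι) (x : ι → ℝ)
    (hx : ∀ i, 0 ≤ x i) :
    ∑ i ∈ S, ∑ j ∈ S, (if h i j then (1 : ℝ) else 0) * x i * x j ≤ 1 / 2 * (∑ i ∈ S, x i) ^ 2 := by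
  refine lag_symm (fun i j => if h i j then (1 : ℝ) else 0) ?_ ?_ _ ?_ S x hx
  · intro i j
    simp only [show h i j ↔ h j i from ⟨hs i j, hs j i⟩]
  · intro i; simp [hd]
  · intro T hT y hy
    have hT' : ∀ i ∈ T, ∀ j ∈ T, i ≠ j → h i j := fun i hi j hj hij => by
      by_contra hn; exact hT i hi j hj hij (by simp [hn])
    have hcard : T.card ≤ 2 := by
      by_contra! hc
      obtain ⟨a, b, c, ha, hb, hc, hab, hac, hbc⟩ := Finset.two_lt_card_iff.1 hc
      exact htri a b c (hT' a ha b hb hab) (hT' a ha c hc hac) (hT' b hb c hc hbc)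
    interval_cases hh : T.card
    · rw [Finset.card_eq_zero.1 hh]; simp
    · obtain ⟨a, rfl⟩ := Finset.card_eq_one.1 hh
      simp [hd]; positivity
    · obtain ⟨a, b, hab, rfl⟩ := Finset.card_eq_two.1 hh
      have h1 := hT' a (by simp) b (by simp) hab
      simp only [Finset.sum_pair hab, hd, h1, hs a b h1, if_true, if_false]
      nlinarith [sq_nonneg (y a - y b)]

/-- On a set of clusters with pairwise positive levels, the constraints coming from the absence of
`K₁₁` bound the quadratic form of the levels by `16/7`. -/
theorem lag_clique {ι : Type*} [DecidableEq ι] (s : ι → ι → ℕ) (hs : ∀ i j, s i j = s j i)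
    (hd : ∀ i, s i i = 0) (h4 : ∀ i j, s i j ≤ 4) (S : Finset ι)
    (hS : ∀ i ∈ S, ∀ j ∈ S, i ≠ j → s i j ≠ 0)
    (hE : ∀ T ⊆ S, T.card ≤ 6 → ∀ i ∈ T, ∀ j ∈ T, i ≠ j → s i j + T.card ≤ 8)
    (hT : S.card ≤ 5 → ∀ i ∈ S, ∀ j ∈ S, ∀ k ∈ S, i ≠ j → i ≠ k → j ≠ k →
      s i j + s i k + s j k + S.card ≤ 13)
    (x : ι → ℝ) (hx : ∀ i, 0 ≤ x i) :
    ∑ i ∈ S, ∑ j ∈ S, (s i j : ℝ) * x i * x j ≤ 16 / 7 * (∑ i ∈ S, x i) ^ 2 := by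
  have hpos : ∀ i ∈ S, ∀ j ∈ S, i ≠ j → 1 ≤ s i j ∧ s i j ≤ 4 := fun i hi j hj hij =>
    ⟨Nat.one_le_iff_ne_zero.2 (hS i hi j hj hij), h4 i j⟩
  have sq_sum : (∑ i ∈ S, x i) ^ 2 = ∑ i ∈ S, ∑ j ∈ S, x i * x j := by
    rw [sq, Finset.sum_mul_sum]
  rcases le_or_gt 6 S.card with h6 | h6
  · have h2 : ∀ i ∈ S, ∀ j ∈ S, s i j ≤ 2 := by
      intro i hi j hj
      by_cases hij : i = j
      · simp [hij, hd]
      obtain ⟨T, h1, h2, h3⟩ := Finset.exists_subsuperset_card_eq (s := {i, j}) (t := S) (n := 6)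
        (by simp [Finset.insert_subset_iff, hi, hj]) (by rw [Finset.card_pair hij]; norm_num) h6
      have := hE T h2 h3.le i (h1 (by simp)) j (h1 (by simp)) hij
      omega
    have : ∑ i ∈ S, ∑ j ∈ S, (s i j : ℝ) * x i * x j ≤ 2 * (∑ i ∈ S, x i) ^ 2 := by
      rw [sq_sum, Finset.mul_sum]
      refine Finset.sum_le_sum fun i hi => ?_
      rw [Finset.mul_sum]
      refine Finset.sum_le_sum fun j hj => ?_
      rw [mul_assoc]
      exact mul_le_mul_of_nonneg_right (by exact_mod_cast h2 i hi j hj) (mul_nonneg (hx i) (hx j))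
    nlinarith [sq_nonneg (∑ i ∈ S, x i)]
  interval_cases hc : S.card
  · rw [Finset.card_eq_zero.1 hc]; simp
  · obtain ⟨a, rfl⟩ := Finset.card_eq_one.1 hc
    simp [hd]; positivity
  · obtain ⟨a, b, hab, rfl⟩ := Finset.card_eq_two.1 hc
    simp only [Finset.sum_pair hab, hd, hs b a]
    have : (s a b : ℝ) ≤ 4 := by exact_mod_cast h4 a b
    have := mul_le_mul_of_nonneg_right this (mul_nonneg (hx a) (hx b))
    push_cast
    nlinarith [sq_nonneg (x a - x b)]
  · obtain ⟨a, b, c, hab, hac, hbc, rfl⟩ := Finset.card_eq_three.1 hc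
    have := k3_gen (x a) (x b) (x c) (hx a) (hx b) (hx c) (s a b) (s a c) (s b c) (h4 _ _) (h4 _ _)
      (h4 _ _) (by
        have := hT (by omega) a (by simp) b (by simp) c (by simp) hab hac hbc
        omega)
    rw [Finset.sum_insert (by simp [hab, hac]), Finset.sum_pair hbc]
    simp only [Finset.sum_insert (show a ∉ ({b, c} : Finset ι) by simp [hab, hac]),
      Finset.sum_pair hbc, hd, hs b a, hs c a, hs c b]
    push_cast
    linarith
  · obtain ⟨a, b, c, d, hab, hac, had, hbc, hbd, hcd, rfl⟩ := Finset.card_eq_four.1 hc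
    have t := fun i hi j hj k hk h1 h2 h3 =>
      (show s i j + s i k + s j k ≤ 9 by
        have := hT (by omega) i hi j hj k hk h1 h2 h3; omega)
    have := k4_gen (x a) (x b) (x c) (x d) (hx a) (hx b) (hx c) (hx d)
      (s a b) (s a c) (s a d) (s b c) (s b d) (s c d)
      (hpos a (by simp) b (by simp) hab) (hpos a (by simp) c (by simp) hac)
      (hpos a (by simp) d (by simp) had) (hpos b (by simp) c (by simp) hbc)
      (hpos b (by simp) d (by simp) hbd) (hpos c (by simp) d (by simp) hcd)
      (t a (by simp) b (by simp) c (by simp) hab hac hbc)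
      (t a (by simp) b (by simp) d (by simp) hab had hbd)
      (t a (by simp) c (by simp) d (by simp) hac had hcd)
      (t b (by simp) c (by simp) d (by simp) hbc hbd hcd)
    have e : ∀ f : ι → ℝ, ∑ i ∈ ({a, b, c, d} : Finset ι), f i = f a + (f b + (f c + f d)) :=
      fun f => by
        rw [Finset.sum_insert (by simp [hab, hac, had]), Finset.sum_insert (by simp [hbc, hbd]),
          Finset.sum_pair hcd]
    simp only [e, hd, hs b a, hs c a, hs c b, hs d a, hs d b, hs d c]
    push_cast
    linarith
  · -- levels are `2` plus the indicator of a triangle-free graph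
    have h3 : ∀ i ∈ S, ∀ j ∈ S, i ≠ j → s i j ≤ 3 := fun i hi j hj hij => by
      have := hE S subset_rfl (by omega) i hi j hj hij
      omega
    let h : ι → ι → Prop := fun i j => i ∈ S ∧ j ∈ S ∧ 3 ≤ s i j
    have key := triangle_free_lag h (fun i j ⟨a, b, c⟩ => ⟨b, a, hs i j ▸ c⟩)
      (fun i ⟨_, _, c⟩ => by rw [hd] at c; omega)
      (fun i j k ⟨a, b, c⟩ ⟨_, b', c'⟩ ⟨_, _, c''⟩ => by
        have ne : ∀ p q, 3 ≤ s p q → p ≠ q := fun p q hpq e => by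
          rw [e, hd] at hpq; omega
        have := hT (by omega) i a j b k b' (ne _ _ c) (ne _ _ c') (ne _ _ c'')
        omega) S x hx
    have cs : (∑ i ∈ S, x i) ^ 2 ≤ 5 * ∑ i ∈ S, x i ^ 2 := by
      have := sq_sum_le_card_mul_sum_sq (s := S) (f := x)
      rw [hc] at this; exact_mod_cast this
    have diag : ∑ i ∈ S, ∑ j ∈ S, (if i = j then x i * x j else 0) = ∑ i ∈ S, x i ^ 2 := by
      refine Finset.sum_congr rfl fun i hi => ?_
      rw [Finset.sum_ite_eq, if_pos hi, sq]
    have : ∑ i ∈ S, ∑ j ∈ S, (s i j : ℝ) * x i * x j ≤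
        2 * (∑ i ∈ S, x i) ^ 2 - 2 * ∑ i ∈ S, x i ^ 2 +
          ∑ i ∈ S, ∑ j ∈ S, (if h i j then (1 : ℝ) else 0) * x i * x j := by
      rw [sq_sum, ← diag]
      simp only [Finset.mul_sum, ← Finset.sum_sub_distrib, ← Finset.sum_add_distrib]
      refine Finset.sum_le_sum fun i hi => Finset.sum_le_sum fun j hj => ?_
      have hn := mul_nonneg (hx i) (hx j)
      by_cases hij : i = j
      · subst hij
        have : ¬ h i i := fun ⟨_, _, c⟩ => by rw [hd] at c; omega
        simp [hd, this]
      · by_cases hh : h i j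
        · have : (s i j : ℝ) ≤ 3 := by exact_mod_cast h3 i hi j hj hij
          rw [if_neg hij, if_pos hh]; nlinarith
        · have : s i j ≤ 2 := by
            by_contra! hlt; exact hh ⟨hi, hj, hlt⟩
          have : (s i j : ℝ) ≤ 2 := by exact_mod_cast this
          rw [if_neg hij, if_neg hh]; nlinarith
    nlinarith [sq_nonneg (∑ i ∈ S, x i)]

/-! ### Embedding cliques -/

/-- One-sided regularity: every `X ⊆ A` and `Y ⊆ B` of size at least `m` have at least
`θ |X| |Y|` edges between them (pairs `(x, y)` with `x ∈ X`, `y ∈ Y` are counted). -/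
def LB {V : Type*} (G : SimpleGraph V) [DecidableRel G.Adj] (m θ : ℝ) (A B : Finset V) : Prop :=
  ∀ X ⊆ A, ∀ Y ⊆ B, m ≤ (X.card : ℝ) → m ≤ (Y.card : ℝ) →
    θ * X.card * Y.card ≤ ∑ x ∈ X, ((Y.filter (G.Adj x)).card : ℝ)

section Embedding

variable {V : Type*} [DecidableEq V] {G : SimpleGraph V} [DecidableRel G.Adj] {m η : ℝ}

omit [DecidableEq V] in
theorem LB.mono {θ θ' : ℝ} {A B A' B' : Finset V} (h : LB G m θ A B) (hA : A' ⊆ A) (hB : B' ⊆ B)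
    (hθ : θ' ≤ θ) : LB G m θ' A' B' := fun X hX Y hY h1 h2 =>
  (by gcongr : θ' * X.card * Y.card ≤ θ * X.card * Y.card).trans
    (h X (hX.trans hA) Y (hY.trans hB) h1 h2)

/-- All but at most `|I| m` vertices of `A` have the expected degree into every `B i`; hence the
vertices of `A` that do so number at least `m`. -/
theorem good_vertices {ι : Type*} (hm : 0 < m) (A : Finset V) (I : Finset ι)
    (B : ι → Finset V) (θ : ι → ℝ) (hLB : ∀ i ∈ I, LB G m (θ i) A (B i))
    (hB : ∀ i ∈ I, m ≤ (B i).card) (hA : (I.card + 1) * m ≤ A.card) :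
    ∃ A' ⊆ A, m ≤ A'.card ∧
      ∀ v ∈ A', ∀ i ∈ I, θ i * (B i).card ≤ ((B i).filter (G.Adj v)).card := by
  let bad : ι → Finset V := fun i =>
    A.filter fun v => ((((B i).filter (G.Adj v)).card : ℝ) < θ i * (B i).card)
  have hbad : ∀ i ∈ I, ((bad i).card : ℝ) ≤ m := by
    intro i hi
    by_contra! hlt
    have h1 := hLB i hi (bad i) (Finset.filter_subset _ _) (B i) subset_rfl hlt.le (hB i hi)
    have hne : (bad i).Nonempty := by
      rw [← Finset.card_pos]; exact_mod_cast hm.trans hlt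
    have h2 : ∑ x ∈ bad i, (((B i).filter (G.Adj x)).card : ℝ) <
        ∑ x ∈ bad i, θ i * (B i).card :=
      Finset.sum_lt_sum_of_nonempty hne fun x hx => (Finset.mem_filter.1 hx).2
    rw [Finset.sum_const, nsmul_eq_mul] at h2
    linarith
  refine ⟨A \ I.biUnion bad, Finset.sdiff_subset, ?_, ?_⟩
  · have h1 : ((I.biUnion bad).card : ℝ) ≤ I.card * m := by
      calc ((I.biUnion bad).card : ℝ) ≤ ∑ i ∈ I, ((bad i).card : ℝ) := by
            exact_mod_cast Finset.card_biUnion_le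
        _ ≤ ∑ i ∈ I, m := Finset.sum_le_sum hbad
        _ = I.card * m := by simp
    have h2 : (A.card : ℝ) ≤ (A \ I.biUnion bad).card + (I.biUnion bad).card := by
      exact_mod_cast Finset.card_le_card_sdiff_add_card
    linarith
  · intro v hv i hi
    by_contra! hlt
    simp only [Finset.mem_sdiff, Finset.mem_biUnion, not_exists, not_and] at hv
    exact hv.2 i hi (Finset.mem_filter.2 ⟨hv.1, hlt⟩)

/-- If all four vertices of `Q` have degree at least `((s - 1) / 4 + η) |B|` into `B`, then at least
`s` of them have `η / 16 · |B|` common neighbours in `B`: at least `η |B|` vertices of `B` see `s`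
vertices of `Q`, and `Q` has `16` subsets. -/
theorem pigeon (Q B : Finset V) (hQ : Q.card = 4) (s : ℕ) (hs : 1 ≤ s)
    (hpos : 0 < η * B.card)
    (hdeg : ∀ v ∈ Q, (((s : ℝ) - 1) / 4 + η) * B.card ≤ (B.filter (G.Adj v)).card) :
    ∃ T ⊆ Q, s ≤ T.card ∧ ∃ B' ⊆ B, η / 16 * B.card ≤ B'.card ∧ ∀ t ∈ T, ∀ b ∈ B', G.Adj t b := by
  let f : V → Finset V := fun b => Q.filter fun v => G.Adj v b
  let B₁ := B.filter fun b => s ≤ (f b).card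
  have hcount : ∑ b ∈ B, ((f b).card : ℝ) = ∑ v ∈ Q, ((B.filter (G.Adj v)).card : ℝ) := by
    exact_mod_cast (Finset.sum_card_bipartiteAbove_eq_sum_card_bipartiteBelow
      (s := Q) (t := B) G.Adj).symm
  have hlow : ((s : ℝ) - 1 + 4 * η) * B.card ≤ ∑ b ∈ B, ((f b).card : ℝ) := by
    rw [hcount]
    calc ((s : ℝ) - 1 + 4 * η) * B.card = ∑ v ∈ Q, (((s : ℝ) - 1) / 4 + η) * B.card := by
          rw [Finset.sum_const, hQ, nsmul_eq_mul]; push_cast; ring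
      _ ≤ _ := Finset.sum_le_sum hdeg
  have hup : ∑ b ∈ B, ((f b).card : ℝ) ≤ (s - 1) * B.card + 4 * B₁.card := by
    have : ∑ b ∈ B, ((f b).card : ℝ) ≤
        ∑ b ∈ B, (((s : ℝ) - 1) + 4 * if s ≤ (f b).card then 1 else 0) := by
      refine Finset.sum_le_sum fun b _ => ?_
      have h1 : ((f b).card : ℝ) ≤ 4 := by
        exact_mod_cast hQ ▸ Finset.card_le_card (Finset.filter_subset _ _)
      have h2 : (1 : ℝ) ≤ s := by exact_mod_cast hs
      split_ifs with h
      · linarith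
      · have : ((f b).card : ℝ) + 1 ≤ s := by exact_mod_cast not_le.1 h
        linarith
    refine this.trans (le_of_eq ?_)
    rw [Finset.sum_add_distrib, ← Finset.mul_sum, Finset.sum_boole, Finset.sum_const, nsmul_eq_mul]
    ring
  have hB₁ : η * B.card ≤ B₁.card := by linarith
  have hQp : (Q.powerset.card : ℝ) = 16 := by rw [Finset.card_powerset, hQ]; norm_num
  obtain ⟨T, hT, hfib⟩ := Finset.exists_le_card_fiber_of_nsmul_le_card_of_maps_to
    (s := B₁) (t := Q.powerset) (f := f) (b := η / 16 * B.card)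
    (fun b _ => Finset.mem_powerset.2 (Finset.filter_subset _ _)) ⟨∅, by simp⟩
    (by rw [nsmul_eq_mul, hQp]; linarith)
  have hne : (B₁.filter fun b => f b = T).Nonempty := by
    rw [← Finset.card_pos]
    exact_mod_cast lt_of_lt_of_le (show 0 < η / 16 * B.card by linarith) hfib
  refine ⟨T, Finset.mem_powerset.1 hT, ?_, B₁.filter fun b => f b = T,
    (Finset.filter_subset _ _).trans (Finset.filter_subset _ _), hfib, ?_⟩
  · obtain ⟨b, hb⟩ := hne
    rw [Finset.mem_filter] at hb
    rw [← hb.2]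
    exact (Finset.mem_filter.1 hb.1).2
  · intro t ht b hb
    rw [← (Finset.mem_filter.1 hb).2] at ht
    exact (Finset.mem_filter.1 ht).2

omit [DecidableRel G.Adj] in
theorem isClique_union_of_complete {R C : Finset V} (hR : G.IsClique (R : Set V))
    (hC : G.IsClique (C : Set V)) (h : ∀ r ∈ R, ∀ c ∈ C, G.Adj r c) :
    G.IsClique ((R ∪ C : Finset V) : Set V) ∧ (R ∪ C).card = R.card + C.card := by
  constructor
  · intro a ha b hb hab
    simp only [Finset.coe_union, Set.mem_union, Finset.mem_coe] at ha hb
    rcases ha with ha | ha <;> rcases hb with hb | hb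
    · exact hR ha hb hab
    · exact h a ha b hb
    · exact (h b hb a ha).symm
    · exact hC ha hb hab
  · exact Finset.card_union_of_disjoint
      (Finset.disjoint_left.2 fun a ha hb => G.irrefl (h a ha a hb))

/-- A pair of level `s` contains a clique on `4 + s` vertices: `s` vertices of a `K₄` in `A`,
together with a `K₄` in their common neighbourhood in `B`. -/
theorem edge_clique (hm : 0 < m)
    (hK : ∀ S : Finset V, m ≤ S.card → ∃ Q ⊆ S, G.IsNClique 4 Q)
    (A B : Finset V) (s : ℕ) (hs : 1 ≤ s) (hLB : LB G m (((s : ℝ) - 1) / 4 + η) A B)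
    (hA : 2 * m ≤ A.card) (hB : m ≤ B.card) (hB' : m ≤ η / 16 * B.card) :
    ∃ C ⊆ A ∪ B, G.IsClique (C : Set V) ∧ 4 + s ≤ C.card := by
  obtain ⟨A', hA', hmA', hgood⟩ := good_vertices hm A ({()} : Finset Unit) (fun _ => B)
    (fun _ => ((s : ℝ) - 1) / 4 + η) (fun _ _ => hLB) (fun _ _ => hB) (by simp; linarith)
  obtain ⟨Q, hQA, hQ⟩ := hK A' hmA'
  obtain ⟨T, hTQ, hsT, B', hB'B, hB'c, hadj⟩ := pigeon Q B hQ.card_eq s hs (by nlinarith)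
    (fun v hv => hgood v (hQA hv) () (by simp))
  obtain ⟨P, hPB, hP⟩ := hK B' (hB'.trans hB'c)
  obtain ⟨h1, h2⟩ := isClique_union_of_complete (hQ.isClique.subset (Finset.coe_subset.2 hTQ))
    hP.isClique (fun t ht p hp => hadj t ht p (hPB hp))
  refine ⟨T ∪ P, Finset.union_subset_union (hTQ.trans (hQA.trans hA')) (hPB.trans hB'B), h1, ?_⟩
  rw [h2, hP.card_eq]; omega

/-- A triple of clusters with levels `s₁, s₂, s₃` contains a clique on `s₁ + s₂ + s₃` vertices. Of a
`K₄` in `A`, at least `s₁ + s₂ - 4` vertices are joined to large parts of both `B` and `C`, and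
these parts contain a clique on `4 + s₃` vertices. -/
theorem tri_clique (hm : 0 < m) (hη : 0 < η) (hη1 : η ≤ 1)
    (hK : ∀ S : Finset V, m ≤ S.card → ∃ Q ⊆ S, G.IsNClique 4 Q)
    (A B C : Finset V) (s₁ s₂ s₃ : ℕ) (hs₁ : 1 ≤ s₁) (hs₂ : 1 ≤ s₂) (hs₃ : 1 ≤ s₃)
    (hAB : LB G m (((s₁ : ℝ) - 1) / 4 + η) A B) (hAC : LB G m (((s₂ : ℝ) - 1) / 4 + η) A C)
    (hBC : LB G m (((s₃ : ℝ) - 1) / 4 + η) B C)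
    (hA : 3 * m ≤ A.card) (hB : 256 * m ≤ η ^ 2 * B.card) (hC : 256 * m ≤ η ^ 2 * C.card) :
    ∃ R ⊆ A ∪ (B ∪ C), G.IsClique (R : Set V) ∧ s₁ + s₂ + s₃ ≤ R.card := by
  have hle : ∀ X : Finset V, 256 * m ≤ η ^ 2 * X.card →
      m ≤ X.card ∧ 256 * m ≤ η * X.card := fun X hX => by
    have h0 : (0 : ℝ) ≤ X.card := by positivity
    have h1 : η * (X.card : ℝ) ≤ X.card := mul_le_of_le_one_left h0 hη1
    have h2 : η * (η * (X.card : ℝ)) ≤ η * X.card := mul_le_mul_of_nonneg_left h1 hη.le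
    constructor <;> nlinarith
  obtain ⟨A', hA', hmA', hgood⟩ := good_vertices hm A (Finset.univ : Finset Bool)
    (fun i => if i then B else C)
    (fun i => if i then ((s₁ : ℝ) - 1) / 4 + η else ((s₂ : ℝ) - 1) / 4 + η)
    (fun i _ => by cases i <;> simpa) (fun i _ => by
      cases i
      · simpa using (hle C hC).1
      · simpa using (hle B hB).1) (by simp; linarith)
  obtain ⟨Q, hQA, hQ⟩ := hK A' hmA'
  obtain ⟨T₁, hTQ₁, hsT₁, B', hB'B, hB'c, hadj₁⟩ := pigeon Q B hQ.card_eq s₁ hs₁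
    (by linarith [(hle B hB).2])
    (fun v hv => by simpa using hgood v (hQA hv) true (by simp))
  obtain ⟨T₂, hTQ₂, hsT₂, C', hC'C, hC'c, hadj₂⟩ := pigeon Q C hQ.card_eq s₂ hs₂
    (by linarith [(hle C hC).2])
    (fun v hv => by simpa using hgood v (hQA hv) false (by simp))
  have hBη : η ^ 2 * B.card ≤ 16 * η * B'.card := by nlinarith
  have hCη : η ^ 2 * C.card ≤ 16 * η * C'.card := by nlinarith
  obtain ⟨D, hD, hDc, hDs⟩ := edge_clique hm hK B' C' s₃ hs₃ (hBC.mono hB'B hC'C le_rfl)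
    (by linarith [(hle B hB).2]) (by linarith [(hle C hC).2]) (by linarith)
  obtain ⟨h1, h2⟩ := isClique_union_of_complete (R := T₁ ∩ T₂)
    (hQ.isClique.subset (Finset.coe_subset.2 (Finset.inter_subset_left.trans hTQ₁)))
    hDc (fun t ht d hd => by
      rw [Finset.mem_inter] at ht
      rcases Finset.mem_union.1 (hD hd) with h | h
      · exact hadj₁ t ht.1 d h
      · exact hadj₂ t ht.2 d h)
  refine ⟨T₁ ∩ T₂ ∪ D, Finset.union_subset_union
    (Finset.inter_subset_left.trans (hTQ₁.trans (hQA.trans hA')))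
    (hD.trans (Finset.union_subset_union hB'B hC'C)), h1, ?_⟩
  have h3 := Finset.card_union_add_card_inter T₁ T₂
  have h4 : (T₁ ∪ T₂).card ≤ 4 := hQ.card_eq ▸ Finset.card_le_card (Finset.union_subset hTQ₁ hTQ₂)
  omega

/-- Picking one vertex from each cluster indexed by `J` greedily gives a clique `R` whose common
neighbourhood in each cluster indexed by `K` is still a positive proportion of it. -/
theorem peel {ι : Type*} [DecidableEq ι] (hm : 0 < m) (hη : 0 < η) (hη1 : η ≤ 1) (J : Finset ι) :
    ∀ (K : Finset ι) (B : ι → Finset V) (M : ℝ), Disjoint J K → (∀ i ∈ J ∪ K, M ≤ (B i).card) →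
      (∀ i ∈ J ∪ K, ∀ j ∈ J ∪ K, i ≠ j → LB G m η (B i) (B j)) →
      ((J.card : ℝ) + K.card + 1) * m ≤ η ^ J.card * M →
      ∃ (R : Finset V) (B' : ι → Finset V), R ⊆ J.biUnion B ∧ G.IsClique (R : Set V) ∧
        R.card = J.card ∧ ∀ i ∈ K, B' i ⊆ B i ∧ η ^ J.card * M ≤ (B' i).card ∧
          ∀ r ∈ R, ∀ b ∈ B' i, G.Adj r b := by
  induction J using Finset.induction_on with
  | empty =>
    intro K B M _ hM _ _
    exact ⟨∅, B, by simp, by simp, by simp, fun i hi =>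
      ⟨subset_rfl, by simpa using hM i (by simpa using hi), by simp⟩⟩
  | insert j J hj ih =>
    intro K B M hdis hM hLB hsize
    rw [Finset.card_insert_of_notMem hj] at hsize ⊢
    push_cast at hsize
    have hjK : j ∉ K := Finset.disjoint_left.1 hdis (by simp)
    have hdis' : Disjoint J K := hdis.mono_left (Finset.subset_insert _ _)
    have hsub : ∀ i ∈ J ∪ K, i ∈ insert j J ∪ K ∧ j ≠ i := fun i hi => by
      rw [Finset.mem_union] at hi
      refine ⟨by simp; tauto, ?_⟩
      rintro rfl
      tauto
    have hjm : j ∈ insert j J ∪ K := by simp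
    have hp : 0 < η ^ (J.card + 1) := by positivity
    have hM0 : 0 ≤ M := by
      by_contra! hneg
      have : 0 ≤ ((J.card : ℝ) + 1 + K.card + 1) * m := by positivity
      nlinarith [mul_neg_of_pos_of_neg hp hneg]
    have hMle : η ^ (J.card + 1) * M ≤ M := mul_le_of_le_one_left hM0 (pow_le_one₀ hη.le hη1)
    have hcard : (((J ∪ K).card : ℝ)) = J.card + K.card := by
      exact_mod_cast Finset.card_union_of_disjoint hdis'
    have hk0 : (0 : ℝ) ≤ ((J.card : ℝ) + K.card) * m := by positivity
    obtain ⟨A', hA', hmA', hgood⟩ := good_vertices hm (B j) (J ∪ K) B (fun _ => η)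
      (fun i hi => hLB j hjm i (hsub i hi).1 (hsub i hi).2)
      (fun i hi => by have := hM i (hsub i hi).1; linarith)
      (by rw [hcard]; have := hM j hjm; linarith)
    obtain ⟨v, hv⟩ : A'.Nonempty := by
      rw [← Finset.card_pos]; exact_mod_cast hm.trans_le hmA'
    obtain ⟨R, B', hR, hRc, hRcard, hB'⟩ := ih K (fun i => (B i).filter (G.Adj v)) (η * M) hdis'
      (fun i hi => (mul_le_mul_of_nonneg_left (hM i (hsub i hi).1) hη.le).trans (hgood v hv i hi))
      (fun i hi k hk hik => (hLB i (hsub i hi).1 k (hsub k hk).1 hik).mono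
        (Finset.filter_subset _ _) (Finset.filter_subset _ _) le_rfl)
      (by rw [← mul_assoc, ← pow_succ]; linarith)
    have hvR : ∀ r ∈ R, G.Adj v r := fun r hr => by
      obtain ⟨i, _, hi⟩ := Finset.mem_biUnion.1 (hR hr)
      exact (Finset.mem_filter.1 hi).2
    obtain ⟨h1, h2⟩ := isClique_union_of_complete (R := {v}) (by simp) hRc
      (fun r hr c hc => by rw [Finset.mem_singleton.1 hr]; exact hvR c hc)
    refine ⟨{v} ∪ R, B', ?_, h1, by rw [h2, hRcard, Finset.card_singleton]; omega, ?_⟩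
    · rw [Finset.biUnion_insert]
      refine Finset.union_subset_union (by simpa using hA' hv) (hR.trans ?_)
      exact Finset.biUnion_mono fun i _ => Finset.filter_subset _ _
    · intro i hi
      obtain ⟨b1, b2, b3⟩ := hB' i hi
      refine ⟨b1.trans (Finset.filter_subset _ _), by rw [pow_succ]; linarith, ?_⟩
      intro r hr b hb
      rcases Finset.mem_union.1 hr with h | h
      · rw [Finset.mem_singleton.1 h]; exact (Finset.mem_filter.1 (b1 hb)).2
      · exact b3 r h b hb

end Embedding

/-! ### Constraints on the levels -/

section Clusters

variable {V ι : Type*} [DecidableEq V] [DecidableEq ι] {G : SimpleGraph V} [DecidableRel G.Adj]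
  {m η N : ℝ}

/-- In a `K₁₁`-free graph, a pair of level `s` in a set of `k ≤ 6` clusters with pairwise positive
levels satisfies `s + k ≤ 8`: otherwise a clique on `4 + s` vertices in the pair and one vertex from
each of the other `k - 2` clusters form a clique on at least `11` vertices. -/
theorem cluster_edge (hm : 0 < m) (hη : 0 < η) (hη1 : η ≤ 1) (hG : G.CliqueFree 11)
    (hK : ∀ S : Finset V, m ≤ S.card → ∃ Q ⊆ S, G.IsNClique 4 Q) (hN : 256 * m ≤ η ^ 6 * N)
    (B : ι → Finset V) (s : ι → ι → ℕ) (S : Finset ι) (hS : S.card ≤ 6)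
    (hB : ∀ i ∈ S, N ≤ (B i).card) (hs : ∀ i ∈ S, ∀ j ∈ S, i ≠ j → 1 ≤ s i j)
    (hLB : ∀ i ∈ S, ∀ j ∈ S, i ≠ j → LB G m (((s i j : ℝ) - 1) / 4 + η) (B i) (B j))
    (i : ι) (hi : i ∈ S) (j : ι) (hj : j ∈ S) (hij : i ≠ j) : s i j + S.card ≤ 8 := by
  have hK2 : ({i, j} : Finset ι) ⊆ S := by simp [Finset.insert_subset_iff, hi, hj]
  have hc := Finset.card_sdiff_add_card_eq_card hK2
  rw [Finset.card_pair hij] at hc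
  have hU : S \ {i, j} ∪ {i, j} = S := Finset.sdiff_union_of_subset hK2
  have hN0 : 0 ≤ N := by
    by_contra! h
    nlinarith [mul_neg_of_pos_of_neg (pow_pos hη 6) h]
  have hpow : η ^ 4 * N ≤ η ^ (S \ {i, j}).card * N :=
    mul_le_mul_of_nonneg_right (pow_le_pow_of_le_one hη.le hη1 (by omega)) hN0
  have h6 : η ^ 6 * N ≤ η * (η ^ 4 * N) := by
    rw [← mul_assoc, ← pow_succ']
    exact mul_le_mul_of_nonneg_right (pow_le_pow_of_le_one hη.le hη1 (by omega)) hN0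
  have h5 : η * (η ^ 4 * N) ≤ η ^ 4 * N := mul_le_of_le_one_left (by positivity) hη1
  have hcJ : (((S \ {i, j}).card : ℝ)) ≤ 4 := by exact_mod_cast (by omega)
  obtain ⟨R, B', hR, hRc, hRcard, hB'⟩ := peel hm hη hη1 (S \ {i, j}) {i, j} B N
    Finset.sdiff_disjoint (fun k hk => hB k (hU ▸ hk))
    (fun k hk l hl hkl => (hLB k (hU ▸ hk) l (hU ▸ hl) hkl).mono subset_rfl subset_rfl (by
      have : (1 : ℝ) ≤ s k l := by exact_mod_cast hs k (hU ▸ hk) l (hU ▸ hl) hkl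
      linarith))
    (by rw [Finset.card_pair hij]; push_cast; nlinarith)
  obtain ⟨i1, i2, i3⟩ := hB' i (by simp)
  obtain ⟨j1, j2, j3⟩ := hB' j (by simp)
  have j2' := mul_le_mul_of_nonneg_left (hpow.trans j2) hη.le
  obtain ⟨C, hC, hCc, hCn⟩ := edge_clique hm hK (B' i) (B' j) (s i j) (hs i hi j hj hij)
    ((hLB i hi j hj hij).mono i1 j1 le_rfl) (by linarith) (by linarith) (by linarith)
  obtain ⟨h1, h2⟩ := isClique_union_of_complete hRc hCc (fun r hr c hc => by
    rcases Finset.mem_union.1 (hC hc) with h | h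
    · exact i3 r hr c h
    · exact j3 r hr c h)
  by_contra! hlt
  exact (hG.mono (show 11 ≤ (R ∪ C).card by omega)) _ ⟨h1, rfl⟩

/-- In a `K₁₁`-free graph, levels `s₁, s₂, s₃` of a triple in a set of `k ≤ 5` clusters with pairwise
positive levels satisfy `s₁ + s₂ + s₃ + k ≤ 13`: there is a clique on `s₁ + s₂ + s₃ + (k - 3)`
vertices. -/
theorem cluster_tri (hm : 0 < m) (hη : 0 < η) (hη1 : η ≤ 1) (hG : G.CliqueFree 11)
    (hK : ∀ S : Finset V, m ≤ S.card → ∃ Q ⊆ S, G.IsNClique 4 Q) (hN : 256 * m ≤ η ^ 6 * N)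
    (B : ι → Finset V) (s : ι → ι → ℕ) (S : Finset ι) (hS : S.card ≤ 5)
    (hB : ∀ i ∈ S, N ≤ (B i).card) (hs : ∀ i ∈ S, ∀ j ∈ S, i ≠ j → 1 ≤ s i j)
    (hLB : ∀ i ∈ S, ∀ j ∈ S, i ≠ j → LB G m (((s i j : ℝ) - 1) / 4 + η) (B i) (B j))
    (i : ι) (hi : i ∈ S) (j : ι) (hj : j ∈ S) (k : ι) (hk : k ∈ S) (hij : i ≠ j) (hik : i ≠ k)
    (hjk : j ≠ k) : s i j + s i k + s j k + S.card ≤ 13 := by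
  have hK2 : ({i, j, k} : Finset ι) ⊆ S := by simp [Finset.insert_subset_iff, hi, hj, hk]
  have hc3 : ({i, j, k} : Finset ι).card = 3 := Finset.card_eq_three.2 ⟨i, j, k, hij, hik, hjk, rfl⟩
  have hc := Finset.card_sdiff_add_card_eq_card hK2
  rw [hc3] at hc
  have hU : S \ {i, j, k} ∪ {i, j, k} = S := Finset.sdiff_union_of_subset hK2
  have hN0 : 0 ≤ N := by
    by_contra! h
    nlinarith [mul_neg_of_pos_of_neg (pow_pos hη 6) h]
  have hpow : η ^ 4 * N ≤ η ^ (S \ {i, j, k}).card * N :=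
    mul_le_mul_of_nonneg_right (pow_le_pow_of_le_one hη.le hη1 (by omega)) hN0
  have h6 : η ^ 6 * N = η ^ 2 * (η ^ 4 * N) := by ring
  have h5 : η ^ 2 * (η ^ 4 * N) ≤ η ^ 4 * N :=
    mul_le_of_le_one_left (by positivity) (pow_le_one₀ hη.le hη1)
  have hcJ : (((S \ {i, j, k}).card : ℝ)) ≤ 4 := by exact_mod_cast (by omega)
  obtain ⟨R, B', hR, hRc, hRcard, hB'⟩ := peel hm hη hη1 (S \ {i, j, k}) {i, j, k} B N
    Finset.sdiff_disjoint (fun k hk => hB k (hU ▸ hk))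
    (fun k hk l hl hkl => (hLB k (hU ▸ hk) l (hU ▸ hl) hkl).mono subset_rfl subset_rfl (by
      have : (1 : ℝ) ≤ s k l := by exact_mod_cast hs k (hU ▸ hk) l (hU ▸ hl) hkl
      linarith))
    (by rw [hc3]; push_cast; nlinarith)
  obtain ⟨i1, i2, i3⟩ := hB' i (by simp)
  obtain ⟨j1, j2, j3⟩ := hB' j (by simp)
  obtain ⟨k1, k2, k3⟩ := hB' k (by simp)
  have j2' := mul_le_mul_of_nonneg_left (hpow.trans j2) (pow_pos hη 2).le
  have k2' := mul_le_mul_of_nonneg_left (hpow.trans k2) (pow_pos hη 2).le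
  obtain ⟨C, hC, hCc, hCn⟩ := tri_clique hm hη hη1 hK (B' i) (B' j) (B' k) (s i j) (s i k) (s j k)
    (hs i hi j hj hij) (hs i hi k hk hik) (hs j hj k hk hjk)
    ((hLB i hi j hj hij).mono i1 j1 le_rfl) ((hLB i hi k hk hik).mono i1 k1 le_rfl)
    ((hLB j hj k hk hjk).mono j1 k1 le_rfl) (by linarith) (by linarith) (by linarith)
  obtain ⟨h1, h2⟩ := isClique_union_of_complete hRc hCc (fun r hr c hc => by
    rcases Finset.mem_union.1 (hC hc) with h | h
    · exact i3 r hr c h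
    rcases Finset.mem_union.1 h with h | h
    · exact j3 r hr c h
    · exact k3 r hr c h)
  by_contra! hlt
  exact (hG.mono (show 11 ≤ (R ∪ C).card by omega)) _ ⟨h1, rfl⟩

omit [DecidableEq V] in
theorem LB_of_isUniform {ε' : ℝ} (hm : 0 < m) (A B : Finset V)
    (hU : G.IsUniform ε' A B) (hA : A.card * ε' ≤ m) (hB : B.card * ε' ≤ m) {θ : ℝ}
    (hθ : θ + ε' ≤ G.edgeDensity A B) : LB G m θ A B := by
  intro X hX Y hY hmX hmY
  have h := abs_lt.1 (hU hX hY (hA.trans hmX) (hB.trans hmY))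
  have hX0 := hm.trans_le hmX
  have hY0 := hm.trans_le hmY
  have hsum : ∑ x ∈ X, ((Y.filter (G.Adj x)).card : ℝ) = ((G.interedges X Y).card : ℝ) := by
    rw [SimpleGraph.interedges, Rel.interedges, Finset.card_filter, Finset.sum_product]
    simp only [Finset.card_filter]
    push_cast
    rfl
  have hden : (G.edgeDensity X Y : ℝ) * (X.card * Y.card) = ((G.interedges X Y).card : ℝ) := by
    rw [SimpleGraph.edgeDensity_def]
    push_cast
    rw [div_mul_cancel₀]
    positivity
  rw [hsum, ← hden, mul_assoc]
  exact mul_le_mul_of_nonneg_right (by linarith [h.1]) (by positivity)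

end Clusters

/-! ### Regularity and the edge count -/

section Regularity

variable {V : Type} [Fintype V] [DecidableEq V] (G : SimpleGraph V) [DecidableRel G.Adj]

/-- The level of a pair of clusters: the least natural number `s` with `d ≤ s / 4 + 2η`, where `d` is
the density of the pair. It is `0` unless the pair is an `ε`-uniform pair of distinct parts
of `P`. -/
noncomputable def level (P : Finpartition (univ : Finset V)) (ε η : ℝ) (A B : Finset V) : ℕ :=
  if A ∈ P.parts ∧ B ∈ P.parts ∧ A ≠ B ∧ G.IsUniform ε A B
    then ⌈4 * ((G.edgeDensity A B : ℝ) - 2 * η)⌉₊ else 0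

variable {G} {P : Finpartition (univ : Finset V)} {ε η : ℝ}

theorem level_symm (A B : Finset V) : level G P ε η A B = level G P ε η B A := by
  unfold level
  rw [G.edgeDensity_comm A B]
  refine if_congr ?_ rfl rfl
  rw [SimpleGraph.isUniform_comm, ne_comm]
  tauto

theorem level_self (A : Finset V) : level G P ε η A A = 0 := by
  simp [level]

theorem level_le (hη : 0 < η) (A B : Finset V) : level G P ε η A B ≤ 4 := by
  unfold level
  split_ifs
  · refine Nat.ceil_le.2 ?_
    have : (G.edgeDensity A B : ℝ) ≤ 1 := by exact_mod_cast G.edgeDensity_le_one A B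
    push_cast
    linarith
  · simp

/-- A pair of level `s ≥ 1` has density more than `(s - 1) / 4 + 2η`. -/
theorem level_LB {m : ℝ} (hm : 0 < m) (hεη : ε ≤ η) (A B : Finset V)
    (hA : A.card * ε ≤ m) (hB : B.card * ε ≤ m) (h : level G P ε η A B ≠ 0) :
    LB G m (((level G P ε η A B : ℝ) - 1) / 4 + η) A B := by
  have hc : A ∈ P.parts ∧ B ∈ P.parts ∧ A ≠ B ∧ G.IsUniform ε A B := by
    by_contra hc
    exact h (if_neg hc)
  refine LB_of_isUniform hm A B hc.2.2.2 hA hB ?_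
  have h1 : level G P ε η A B = ⌈4 * ((G.edgeDensity A B : ℝ) - 2 * η)⌉₊ := if_pos hc
  have h2 : level G P ε η A B - 1 < level G P ε η A B := by omega
  rw [h1, Nat.lt_ceil, ← h1, Nat.cast_sub (by omega)] at h2
  push_cast at h2
  linarith

/-- The edges of a pair are bounded by its level, except that diagonal and irregular pairs get the
trivial bound. -/
theorem interedges_le (hη : 0 < η) {A B : Finset V} (hA : A ∈ P.parts) (hB : B ∈ P.parts) :
    ((G.interedges A B).card : ℝ) ≤ (level G P ε η A B / 4 + 2 * η) * (A.card * B.card) +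
      (if A = B then (A.card * B.card : ℝ) else 0) +
      (if (A, B) ∈ P.nonUniforms G ε then (A.card * B.card : ℝ) else 0) := by
  have hle : ((G.interedges A B).card : ℝ) ≤ A.card * B.card := by
    exact_mod_cast G.card_interedges_le_mul A B
  have h0 : (0 : ℝ) ≤ (level G P ε η A B / 4 + 2 * η) * (A.card * B.card) := by positivity
  have h00 : (0 : ℝ) ≤ A.card * B.card := by positivity
  by_cases hAB : A = B
  · rw [if_pos hAB]
    split_ifs <;> linarith
  by_cases hU : G.IsUniform ε A B
  · have h1 : level G P ε η A B = ⌈4 * ((G.edgeDensity A B : ℝ) - 2 * η)⌉₊ :=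
      if_pos ⟨hA, hB, hAB, hU⟩
    have h2 := Nat.le_ceil (4 * ((G.edgeDensity A B : ℝ) - 2 * η))
    rw [← h1] at h2
    have hA0 := (P.nonempty_of_mem_parts hA).card_pos
    have hB0 := (P.nonempty_of_mem_parts hB).card_pos
    have hden : (G.edgeDensity A B : ℝ) * (A.card * B.card) = ((G.interedges A B).card : ℝ) := by
      rw [SimpleGraph.edgeDensity_def]
      push_cast
      rw [div_mul_cancel₀]
      positivity
    have h3 : (G.edgeDensity A B : ℝ) * (A.card * B.card) ≤
        (level G P ε η A B / 4 + 2 * η) * (A.card * B.card) :=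
      mul_le_mul_of_nonneg_right (by linarith) h00
    split_ifs <;> linarith
  · have : (A, B) ∈ P.nonUniforms G ε :=
      (Finpartition.mk_mem_nonUniforms _ _).2 ⟨hA, hB, hAB, hU⟩
    rw [if_pos this, if_neg hAB]
    linarith

theorem level_lagrangian (hη : 0 < η) (hη1 : η ≤ 1) (hε : ε = η ^ 6 / 512)
    (hG : G.CliqueFree 11) (hP : P.IsEquipartition) (hN : 1 ≤ Fintype.card V / P.parts.card)
    (hK : ∀ S : Finset V, 2 * ε * ((Fintype.card V / P.parts.card : ℕ) : ℝ) ≤ S.card →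
      ∃ Q ⊆ S, G.IsNClique 4 Q) :
    ∑ A ∈ P.parts, ∑ B ∈ P.parts, (level G P ε η A B : ℝ) * A.card * B.card ≤
      16 / 7 * (Fintype.card V : ℝ) ^ 2 := by
  set N := Fintype.card V / P.parts.card with hNdef
  have hN' : (1 : ℝ) ≤ N := by exact_mod_cast hN
  have hε0 : 0 < ε := by rw [hε]; positivity
  have hεη : ε ≤ η := by
    have : η ^ 6 ≤ η ^ 1 := pow_le_pow_of_le_one hη.le hη1 (by norm_num)
    rw [hε]; linarith
  have hm : 0 < 2 * ε * (N : ℝ) := by positivity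
  have hNm : 256 * (2 * ε * (N : ℝ)) ≤ η ^ 6 * N := by
    rw [hε]; apply le_of_eq; ring
  have hmem : ∀ A B, level G P ε η A B ≠ 0 → A ∈ P.parts ∧ B ∈ P.parts := by
    intro A B h
    by_contra hc
    refine h (if_neg fun h' => hc ⟨h'.1, h'.2.1⟩)
  have hlow : ∀ A ∈ P.parts, (N : ℝ) ≤ A.card := by
    intro A hA
    have := hP.average_le_card_part hA
    rw [Finset.card_univ] at this
    exact_mod_cast this
  have hup : ∀ A ∈ P.parts, (A.card : ℝ) * ε ≤ 2 * ε * N := by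
    intro A hA
    have := hP.card_part_le_average_add_one hA
    rw [Finset.card_univ, ← hNdef] at this
    have h' : (A.card : ℝ) ≤ 2 * N := by
      have : (A.card : ℝ) ≤ N + 1 := by exact_mod_cast this
      linarith
    nlinarith
  have hLB : ∀ A B, level G P ε η A B ≠ 0 →
      LB G (2 * ε * N) (((level G P ε η A B : ℝ) - 1) / 4 + η) A B := by
    intro A B h
    obtain ⟨hA, hB⟩ := hmem A B h
    exact level_LB hm hεη A B (hup A hA) (hup B hB) h
  have hsum : (∑ A ∈ P.parts, (A.card : ℝ)) = Fintype.card V := by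
    have := P.sum_card_parts
    rw [Finset.card_univ] at this
    exact_mod_cast this
  have key := lag_symm (fun A B : Finset V => (level G P ε η A B : ℝ))
    (fun A B => by simp only [level_symm A B]) (fun A => by simp [level_self]) (16 / 7)
    (fun S hS x hx => by
      have hS' : ∀ A ∈ S, ∀ B ∈ S, A ≠ B → level G P ε η A B ≠ 0 := fun A hA B hB h => by
        have := hS A hA B hB h
        exact_mod_cast this
      refine lag_clique (level G P ε η) level_symm level_self (level_le hη) S hS' ?_ ?_ x hx
      · intro T hT hTc A hA B hB hAB
        have hpart : ∀ C ∈ T, C ∈ P.parts := by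
          intro C hC
          by_cases hCA : C = A
          · subst hCA
            exact (hmem C B (hS' _ (hT hC) _ (hT hB) hAB)).1
          · exact (hmem C A (hS' _ (hT hC) _ (hT hA) hCA)).1
        exact cluster_edge hm hη hη1 hG hK hNm id (level G P ε η) T hTc
          (fun C hC => hlow C (hpart C hC))
          (fun C hC D hD h => Nat.one_le_iff_ne_zero.2 (hS' C (hT hC) D (hT hD) h))
          (fun C hC D hD h => hLB C D (hS' C (hT hC) D (hT hD) h)) A hA B hB hAB
      · intro hTc A hA B hB C hC hAB hAC hBC
        have hpart : ∀ C ∈ S, C ∈ P.parts := by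
          intro C hC
          by_cases hCA : C = A
          · subst hCA
            exact (hmem C B (hS' _ hC _ hB hAB)).1
          · exact (hmem C A (hS' _ hC _ hA hCA)).1
        exact cluster_tri hm hη hη1 hG hK hNm id (level G P ε η) S hTc
          (fun C hC => hlow C (hpart C hC))
          (fun C hC D hD h => Nat.one_le_iff_ne_zero.2 (hS' C hC D hD h))
          (fun C hC D hD h => hLB C D (hS' C hC D hD h)) A hA B hB C hC hAB hAC hBC)
    P.parts (fun A => (A.card : ℝ)) (fun A => by positivity)
  rw [hsum] at key
  exact key

theorem edges_le (hη : 0 < η) (hη1 : η ≤ 1) (hε : ε = η ^ 6 / 512)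
    (hG : G.CliqueFree 11) (hP : P.IsEquipartition) (hU : P.IsUniform G ε)
    (hN : 1 ≤ Fintype.card V / P.parts.card)
    (hK : ∀ S : Finset V, 2 * ε * ((Fintype.card V / P.parts.card : ℕ) : ℝ) ≤ S.card →
      ∃ Q ⊆ S, G.IsNClique 4 Q) :
    2 * (G.edgeFinset.card : ℝ) ≤ (4 / 7 + 2 * η + 4 * ε) * (Fintype.card V : ℝ) ^ 2 +
      (((Fintype.card V / P.parts.card : ℕ) : ℝ) + 1) * Fintype.card V := by
  have hL := level_lagrangian hη hη1 hε hG hP hN hK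
  set N := Fintype.card V / P.parts.card with hNdef
  set n : ℝ := (Fintype.card V : ℝ) with hn
  have hε0 : 0 < ε := by rw [hε]; positivity
  have hsum : (∑ A ∈ P.parts, (A.card : ℝ)) = n := by
    have := P.sum_card_parts
    rw [Finset.card_univ] at this
    rw [hn]
    exact_mod_cast this
  have hne : (univ : Finset V).Nonempty := by
    rw [← Finset.card_pos, Finset.card_univ]
    by_contra h
    have : Fintype.card V = 0 := by omega
    rw [hNdef, this] at hN
    simp at hN
  have hcount : 2 * (G.edgeFinset.card : ℝ) =
      ∑ A ∈ P.parts, ∑ B ∈ P.parts, ((G.interedges A B).card : ℝ) := by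
    have h1 : (G.interedges univ univ).card = 2 * G.edgeFinset.card := by
      rw [← G.sum_degrees_eq_twice_card_edges, SimpleGraph.interedges, Rel.interedges,
        Finset.card_filter, Finset.sum_product]
      refine Finset.sum_congr rfl fun v _ => ?_
      rw [← Finset.card_filter, ← G.card_neighborFinset_eq_degree,
        SimpleGraph.neighborFinset_eq_filter]
    have h2 := Rel.card_interedges_finpartition G.Adj P P
    rw [Finset.sum_product] at h2
    rw [← SimpleGraph.interedges, h1] at h2
    exact_mod_cast h2
  have hdiag : ∑ A ∈ P.parts, ∑ B ∈ P.parts, (if A = B then (A.card * B.card : ℝ) else 0) ≤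
      (N + 1) * n := by
    rw [← hsum, Finset.mul_sum]
    refine Finset.sum_le_sum fun A hA => ?_
    rw [Finset.sum_ite_eq, if_pos hA]
    refine mul_le_mul_of_nonneg_right ?_ (by positivity)
    have := hP.card_part_le_average_add_one hA
    rw [Finset.card_univ, ← hNdef] at this
    exact_mod_cast this
  have hirr : ∑ A ∈ P.parts, ∑ B ∈ P.parts,
      (if (A, B) ∈ P.nonUniforms G ε then (A.card * B.card : ℝ) else 0) ≤ 4 * ε * n ^ 2 := by
    rw [← Finset.sum_product' P.parts P.parts
      (fun A B => if (A, B) ∈ P.nonUniforms G ε then (A.card * B.card : ℝ) else 0),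
      ← Finset.sum_filter]
    have hsub : (P.parts ×ˢ P.parts).filter (fun AB => (AB.1, AB.2) ∈ P.nonUniforms G ε) ⊆
        P.nonUniforms G ε := fun AB h => (Finset.mem_filter.1 h).2
    refine (Finset.sum_le_sum_of_subset_of_nonneg hsub fun _ _ _ => by positivity).trans ?_
    refine (hP.sum_nonUniforms_lt' hne hε0 hU).le.trans ?_
    have hk : (P.parts.card : ℝ) ≤ n := by
      have := P.card_parts_le_card
      rw [Finset.card_univ] at this
      rw [hn]
      exact_mod_cast this
    rw [Finset.card_univ, ← hn, mul_comm 4 ε, mul_assoc]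
    refine mul_le_mul_of_nonneg_left ?_ hε0.le
    have h0 : (0 : ℝ) ≤ P.parts.card := by positivity
    nlinarith
  have hmain : ∑ A ∈ P.parts, ∑ B ∈ P.parts,
      (level G P ε η A B / 4 + 2 * η) * (A.card * B.card : ℝ) ≤ (4 / 7 + 2 * η) * n ^ 2 := by
    have e1 : ∑ A ∈ P.parts, ∑ B ∈ P.parts,
        (level G P ε η A B / 4 + 2 * η) * (A.card * B.card : ℝ) =
        1 / 4 * (∑ A ∈ P.parts, ∑ B ∈ P.parts, (level G P ε η A B : ℝ) * A.card * B.card) +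
        2 * η * (∑ A ∈ P.parts, ∑ B ∈ P.parts, (A.card : ℝ) * B.card) := by
      simp only [Finset.mul_sum, ← Finset.sum_add_distrib]
      refine Finset.sum_congr rfl fun A _ => Finset.sum_congr rfl fun B _ => ?_
      ring
    rw [e1, ← Finset.sum_mul_sum, hsum]
    nlinarith
  rw [hcount]
  calc ∑ A ∈ P.parts, ∑ B ∈ P.parts, ((G.interedges A B).card : ℝ)
      ≤ ∑ A ∈ P.parts, ∑ B ∈ P.parts, ((level G P ε η A B / 4 + 2 * η) * (A.card * B.card : ℝ) +
        (if A = B then (A.card * B.card : ℝ) else 0) +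
        (if (A, B) ∈ P.nonUniforms G ε then (A.card * B.card : ℝ) else 0)) :=
        Finset.sum_le_sum fun A hA => Finset.sum_le_sum fun B hB => interedges_le hη hA hB
    _ ≤ (4 / 7 + 2 * η) * n ^ 2 + (N + 1) * n + 4 * ε * n ^ 2 := by
        simp only [Finset.sum_add_distrib]
        linarith
    _ = _ := by ring

end Regularity

theorem exists_clique_of_alphaP_lt {V : Type} [Fintype V] (G : SimpleGraph V) (p : ℕ)
    (S : Finset V) (h : alphaP p G < S.card) : ∃ Q ⊆ S, G.IsNClique p Q := by
  by_contra! hc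
  refine absurd h (not_lt.2 (le_csSup ⟨Fintype.card V, ?_⟩ ⟨S, rfl, hc⟩))
  rintro k ⟨s, rfl, -⟩
  exact s.card_le_univ

/-- Ramsey–Turán upper bound: ρ₄(11) ≤ 4/7. -/
theorem rt_bound_10 (δ : ℝ) (hδ : 0 < δ) :
    ∃ (ε : ℝ) (n₀ : ℕ), 0 < ε ∧
      ∀ (n : ℕ) (G : SimpleGraph (Fin n)), n₀ ≤ n → G.CliqueFree 11 →
        (alphaP 4 G : ℝ) ≤ ε * (n : ℝ) →
        (edgeCount G : ℝ) ≤ (4 / 7 + δ) * (n.choose 2 : ℝ) := by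
  obtain ⟨d, hd0, hd1, hdδ⟩ : ∃ d : ℝ, 0 < d ∧ d ≤ 1 ∧ d ≤ δ :=
    ⟨min δ 1, by positivity, min_le_right _ _, min_le_left _ _⟩
  obtain ⟨η, hη⟩ : ∃ η : ℝ, η = d / 16 := ⟨_, rfl⟩
  have hη0 : 0 < η := by rw [hη]; positivity
  have hη1 : η ≤ 1 := by rw [hη]; linarith
  obtain ⟨ε, hε⟩ : ∃ ε : ℝ, ε = η ^ 6 / 512 := ⟨_, rfl⟩
  have hε0 : 0 < ε := by rw [hε]; positivity
  have hεη : 512 * ε ≤ η := by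
    have : η ^ 6 ≤ η ^ 1 := pow_le_pow_of_le_one hη0.le hη1 (by norm_num)
    rw [hε]; linarith
  -- at least `8 / d` parts, so that pairs inside parts number at most about `d n² / 8`
  obtain ⟨l, hl⟩ : ∃ l : ℕ, l = ⌈8 / d⌉₊ := ⟨_, rfl⟩
  have hl8 : 8 ≤ d * l := by
    have : 8 / d ≤ l := by rw [hl]; exact Nat.le_ceil _
    rw [div_le_iff₀ hd0] at this
    linarith
  obtain ⟨M, hM⟩ : ∃ M : ℕ, M = SzemerediRegularity.bound ε l := ⟨_, rfl⟩
  have hlM : l ≤ M := by rw [hM]; exact SzemerediRegularity.le_bound _ _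
  have hM0 : 0 < M := by rw [hM]; exact SzemerediRegularity.bound_pos _ _
  have hM0' : (0 : ℝ) < M := by exact_mod_cast hM0
  -- parts have more than `n / (2 M)` vertices, so `2 ε N` exceeds `ε n / M`, hence also `α₄(G)`
  refine ⟨ε / (2 * M), max M ⌈16 / d⌉₊, by positivity, fun n G hn hG hα => ?_⟩
  have hnM : M ≤ n := (le_max_left _ _).trans hn
  have hnd : 16 ≤ d * n := by
    have h1 : 16 / d ≤ ⌈16 / d⌉₊ := Nat.le_ceil _
    have h2 : (⌈16 / d⌉₊ : ℝ) ≤ n := by exact_mod_cast (le_max_right _ _).trans hn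
    have := h1.trans h2
    rw [div_le_iff₀ hd0] at this
    linarith
  have hn0 : 0 < n := hM0.trans_le hnM
  have hn0' : (0 : ℝ) < n := by exact_mod_cast hn0
  obtain ⟨P, hP, hlP, hPM, hU⟩ := szemeredi_regularity G hε0
    (show l ≤ Fintype.card (Fin n) by rw [Fintype.card_fin]; omega)
  rw [← hM] at hPM
  have hk0 : 0 < P.parts.card := by
    refine lt_of_lt_of_le ?_ hlP
    by_contra h
    have : l = 0 := by omega
    rw [this] at hl8
    norm_num at hl8
  have hN : 1 ≤ Fintype.card (Fin n) / P.parts.card := by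
    rw [Fintype.card_fin, Nat.one_le_div_iff hk0]
    omega
  have hnlt : (n : ℝ) < 2 * M * ((Fintype.card (Fin n) / P.parts.card : ℕ) : ℝ) := by
    have h1 : n < P.parts.card * (Fintype.card (Fin n) / P.parts.card + 1) := by
      rw [Fintype.card_fin]
      exact Nat.lt_mul_div_succ n hk0
    have h2 : n < 2 * M * (Fintype.card (Fin n) / P.parts.card) := by
      refine h1.trans_le ?_
      calc _ ≤ M * (2 * (Fintype.card (Fin n) / P.parts.card)) :=
            Nat.mul_le_mul hPM (by omega)
        _ = _ := by ring
    exact_mod_cast h2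
  have hNle : d * ((Fintype.card (Fin n) / P.parts.card : ℕ) : ℝ) * 8 ≤ d * (d * n) := by
    have h1 : P.parts.card * (Fintype.card (Fin n) / P.parts.card) ≤ n := by
      rw [Fintype.card_fin]
      exact Nat.mul_div_le n _
    have h2 : l * (Fintype.card (Fin n) / P.parts.card) ≤ n :=
      (Nat.mul_le_mul_right _ hlP).trans h1
    have h3 : (l : ℝ) * ((Fintype.card (Fin n) / P.parts.card : ℕ) : ℝ) ≤ n := by
      exact_mod_cast h2
    have h4 : (0 : ℝ) ≤ d * ((Fintype.card (Fin n) / P.parts.card : ℕ) : ℝ) := by positivity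
    nlinarith [mul_le_mul_of_nonneg_left hl8 h4, mul_le_mul_of_nonneg_left h3 (mul_pos hd0 hd0).le]
  have hE := edges_le hη0 hη1 hε hG hP hU hN fun S hS => by
    refine exists_clique_of_alphaP_lt G 4 S ?_
    have : (alphaP 4 G : ℝ) < S.card := by
      refine hα.trans_lt (lt_of_lt_of_le ?_ hS)
      rw [div_mul_eq_mul_div, div_lt_iff₀ (by positivity)]
      have h1 := mul_lt_mul_of_pos_left hnlt hε0
      have h2 : (0 : ℝ) ≤ ε * (2 * M * ((Fintype.card (Fin n) / P.parts.card : ℕ) : ℝ)) := by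
        positivity
      linarith
    exact_mod_cast this
  have hcount : (edgeCount G : ℝ) = G.edgeFinset.card := by
    rw [edgeCount, ← SimpleGraph.coe_edgeFinset, Set.ncard_coe_finset]
  rw [hcount, Nat.cast_choose_two]
  rw [Fintype.card_fin] at hE hNle
  have hN8 : ((n / P.parts.card : ℕ) : ℝ) * 8 ≤ d * n := by
    have : d * (((n / P.parts.card : ℕ) : ℝ) * 8) ≤ d * (d * n) := by linarith
    exact le_of_mul_le_mul_left this hd0
  have hn1 : (0 : ℝ) ≤ n * (n - 1) := by
    have : (1 : ℝ) ≤ n := by exact_mod_cast hn0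
    exact mul_nonneg hn0'.le (by linarith)
  have hgoal : 2 * (G.edgeFinset.card : ℝ) ≤ (4 / 7 + d) * (n * (n - 1)) := by
    have h1 : (4 / 7 + 2 * η + 4 * ε) * (n : ℝ) ^ 2 ≤ (4 / 7 + d / 4) * (n : ℝ) ^ 2 :=
      mul_le_mul_of_nonneg_right (by rw [hη] at *; linarith) (by positivity)
    have h2 := mul_le_mul_of_nonneg_right hN8 hn0'.le
    have h3 := mul_le_mul_of_nonneg_right hnd hn0'.le
    have h4 := mul_le_mul_of_nonneg_right hd1 hn0'.le
    nlinarith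
  have := mul_le_mul_of_nonneg_right (show 4 / 7 + d ≤ 4 / 7 + δ by linarith) hn1
  linarith
end
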